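/- arXiv:2002.09652 — 11 statements merged into one kernel-verified Lean document; each statement's English description precedes it below -/
import Mathlib

section
/- Let A be a positive semidefinite complex block matrix in M_m(M_n). Then (tr A)^{mn} + (det(tr₁ A))^m ≥ det A + (det(tr₂ A))^n, where tr₁ A = Σ_{i=1}^m A_{i,i} ∈ M_n is the first partial trace and tr₂ A = [tr A_{i,j}]_{i,j=1}^m ∈ M_m is the second partial trace. -/
open Matrix BigOperators ComplexOrder

open scoped Kronecker

/-- Spectral decomposition of a positive semidefinite matrix. -/
lemma pt_spectral {ι : Type*} [Fintype ι] [DecidableEq ι] {W : Matrix ι ι ℂ} (hW : W.PosSemidef) :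
    ∃ (U : Matrix ι ι ℂ) (d : ι → ℝ), U * Uᴴ = 1 ∧ Uᴴ * U = 1 ∧ (∀ i, 0 ≤ d i) ∧
      W = U * diagonal (fun i => (d i : ℂ)) * Uᴴ := by
  refine ⟨hW.isHermitian.eigenvectorUnitary, hW.isHermitian.eigenvalues, ?_, ?_,
    hW.eigenvalues_nonneg, ?_⟩
  · exact Unitary.mul_star_self_of_mem hW.isHermitian.eigenvectorUnitary.2
  · exact Unitary.star_mul_self_of_mem hW.isHermitian.eigenvectorUnitary.2
  · have := hW.isHermitian.spectral_theorem
    rw [Unitary.conjStarAlgAut_apply] at this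
    exact this

lemma pt_det_conj {ι : Type*} [Fintype ι] [DecidableEq ι] {U : Matrix ι ι ℂ} (h : U * Uᴴ = 1)
    (M : Matrix ι ι ℂ) : (U * M * Uᴴ).det = M.det := by
  rw [det_mul, det_mul, mul_right_comm, ← det_mul, h, det_one, one_mul]

lemma pt_smul_one {ι : Type*} [Fintype ι] [DecidableEq ι] {U : Matrix ι ι ℂ} (h : U * Uᴴ = 1)
    (c : ℂ) : c • (1 : Matrix ι ι ℂ) = U * diagonal (fun _ => c) * Uᴴ := by
  have : diagonal (fun _ : ι => c) = c • (1 : Matrix ι ι ℂ) := by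
    rw [smul_one_eq_diagonal]
  rw [this, Matrix.mul_smul, Matrix.smul_mul, Matrix.mul_one, h]

lemma pt_trace {ι : Type*} [Fintype ι] [DecidableEq ι] {W : Matrix ι ι ℂ} (hW : W.PosSemidef) :
    (W.trace • (1 : Matrix ι ι ℂ) - W).PosSemidef := by
  obtain ⟨U, d, h1, h2, hd, e⟩ := pt_spectral hW
  have ht : W.trace = ((∑ i, d i : ℝ) : ℂ) := by
    rw [e, trace_mul_comm, ← Matrix.mul_assoc, h2, Matrix.one_mul, trace_diagonal]
    push_cast; rfl
  rw [ht, pt_smul_one h1]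
  conv => enter [1, 2]; rw [e]
  rw [← Matrix.sub_mul, ← Matrix.mul_sub, diagonal_sub]
  refine (PosSemidef.diagonal ?_).mul_mul_conjTranspose_same U
  intro i
  beta_reduce
  rw [← Complex.ofReal_sub]
  simp only [Pi.zero_apply, Complex.zero_le_real, sub_nonneg]
  exact Finset.single_le_sum (fun j _ => hd j) (Finset.mem_univ i)

lemma pt_det_le {ι : Type*} [Fintype ι] [DecidableEq ι] {W : Matrix ι ι ℂ} (hW : W.PosSemidef)
    (hW1 : (1 - W).PosSemidef) :
    (W - W.det • (1 : Matrix ι ι ℂ)).PosSemidef := by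
  obtain ⟨U, d, h1, h2, hd, e⟩ := pt_spectral hW
  have hdet : W.det = ((∏ i, d i : ℝ) : ℂ) := by
    rw [e, pt_det_conj h1, det_diagonal]
    push_cast; rfl
  have hd1 : ∀ i, d i ≤ 1 := by
    have h := hW1.conjTranspose_mul_mul_same U
    have : Uᴴ * (1 - W) * U = diagonal (fun i => 1 - (d i : ℂ)) := by
      rw [e, Matrix.mul_sub, Matrix.sub_mul, Matrix.mul_one, h2]
      have : Uᴴ * (U * diagonal (fun i => (d i : ℂ)) * Uᴴ) * U
          = (Uᴴ * U) * diagonal (fun i => (d i : ℂ)) * (Uᴴ * U) := by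
        simp only [Matrix.mul_assoc]
      rw [this, h2, Matrix.one_mul, Matrix.mul_one, ← diagonal_one, diagonal_sub]
    rw [this, posSemidef_diagonal_iff] at h
    intro i
    have := h i
    rw [← Complex.ofReal_one, ← Complex.ofReal_sub, Complex.zero_le_real] at this
    linarith
  rw [hdet, pt_smul_one h1]
  conv => enter [1, 1]; rw [e]
  rw [← Matrix.sub_mul, ← Matrix.mul_sub, diagonal_sub]
  refine (PosSemidef.diagonal ?_).mul_mul_conjTranspose_same U
  intro i
  beta_reduce
  rw [← Complex.ofReal_sub]
  simp only [Pi.zero_apply, Complex.zero_le_real, sub_nonneg]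
  rw [← Finset.mul_prod_erase _ _ (Finset.mem_univ i)]
  exact mul_le_of_le_one_right (hd i) (Finset.prod_le_one (fun j _ => hd j) (fun j _ => hd1 j))

lemma pt_det_single {k : ℕ} (M : Matrix (Fin k) (Fin k) ℂ) (i : Fin k) (c : ℂ) :
    (M + diagonal (Pi.single i c)).det = M.det + c * M.adjugate i i := by
  have : M + diagonal (Pi.single i c) = M.updateRow i (M i + c • Pi.single i 1) := by
    ext a b
    by_cases ha : a = i
    · subst ha
      by_cases hb : a = b
      · subst hb; simp
      · simp [hb, Ne.symm hb]
    · by_cases hb : a = b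
      · subst hb; simp [ha]
      · simp [ha, hb]
  rw [this, det_updateRow_add, det_updateRow_smul, updateRow_eq_self, adjugate_apply]

lemma pt_adj {k : ℕ} (M : Matrix (Fin k) (Fin k) ℂ) (i : Fin k) :
    ∃ (l : ℕ) (f : Fin l → Fin k), ∀ M : Matrix (Fin k) (Fin k) ℂ,
      M.adjugate i i = (M.submatrix f f).det := by
  cases k with
  | zero => exact i.elim0
  | succ k =>
    refine ⟨k, i.succAbove, fun M => ?_⟩
    rw [adjugate_fin_succ_eq_det_submatrix, Even.neg_one_pow (by simp), one_mul]

lemma pt_re {z : ℂ} (h : 0 ≤ z) : 0 ≤ z.re := (Complex.le_def.1 h).1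

/-- Induction principle over positive semidefinite matrices. -/
lemma pt_induct {k : ℕ} (P : Matrix (Fin k) (Fin k) ℂ → Prop) (h0 : P 0)
    (hs : ∀ (i : Fin k) (c : ℝ), 0 ≤ c → P (diagonal (Pi.single i (c : ℂ))))
    (hadd : ∀ Q R, Q.PosSemidef → R.PosSemidef → P Q → P R → P (Q + R))
    (hc : ∀ Q U, U * Uᴴ = 1 → Uᴴ * U = 1 → Q.PosSemidef → P Q → P (U * Q * Uᴴ))
    (Q : Matrix (Fin k) (Fin k) ℂ) (hQ : Q.PosSemidef) : P Q := by
  obtain ⟨U, d, h1, h2, hd, e⟩ := pt_spectral hQ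
  have hpos : ∀ i, (diagonal (Pi.single i (d i : ℂ)) : Matrix (Fin k) (Fin k) ℂ).PosSemidef := by
    intro i
    refine PosSemidef.diagonal ?_
    rw [Pi.single_nonneg]
    exact_mod_cast hd i
  have key : ∀ s : Finset (Fin k),
      (∑ i ∈ s, diagonal (Pi.single i (d i : ℂ)) : Matrix (Fin k) (Fin k) ℂ).PosSemidef ∧
      P (∑ i ∈ s, diagonal (Pi.single i (d i : ℂ))) := by
    intro s
    induction s using Finset.induction_on with
    | empty => simpa using ⟨PosSemidef.zero, h0⟩
    | insert a s ha ih =>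
      rw [Finset.sum_insert ha]
      exact ⟨(hpos a).add ih.1, hadd _ _ (hpos a) ih.1 (hs a _ (hd a)) ih.2⟩
  have hsum : (∑ i, diagonal (Pi.single i (d i : ℂ)) : Matrix (Fin k) (Fin k) ℂ)
      = diagonal (fun i => (d i : ℂ)) := by
    ext a b
    rw [Matrix.sum_apply]
    by_cases hab : a = b
    · subst hab; simp [Pi.single_apply]
    · simp [hab]
  have := key Finset.univ
  rw [hsum] at this
  rw [e]
  exact hc _ U h1 h2 this.1 this.2

lemma pt_conj_eq {k : ℕ} {U : Matrix (Fin k) (Fin k) ℂ} (h1 : U * Uᴴ = 1)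
    (M : Matrix (Fin k) (Fin k) ℂ) : M = U * (Uᴴ * M * U) * Uᴴ := by
  have : U * (Uᴴ * M * U) * Uᴴ = (U * Uᴴ) * M * (U * Uᴴ) := by simp only [Matrix.mul_assoc]
  rw [this, h1, Matrix.one_mul, Matrix.mul_one]

lemma pt_det_mono {k : ℕ} (Q : Matrix (Fin k) (Fin k) ℂ) (hQ : Q.PosSemidef) :
    ∀ M : Matrix (Fin k) (Fin k) ℂ, M.PosSemidef → M.det.re ≤ (M + Q).det.re := by
  refine pt_induct (fun Q => ∀ M : Matrix (Fin k) (Fin k) ℂ, M.PosSemidef →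
    M.det.re ≤ (M + Q).det.re) ?_ ?_ ?_ ?_ Q hQ
  · intro M _; simp
  · intro i c hc M hM
    obtain ⟨l, f, hf⟩ := pt_adj M i
    rw [pt_det_single, hf, Complex.add_re, Complex.re_ofReal_mul]
    have := mul_nonneg hc (pt_re (hM.submatrix f).det_nonneg)
    linarith
  · intro Q R hQ hR h1 h2 M hM
    rw [← add_assoc]
    exact (h1 M hM).trans (h2 _ (hM.add hQ))
  · intro Q U h1 h2 hQ h M hM
    have := h _ (hM.conjTranspose_mul_mul_same U)
    have e : M + U * Q * Uᴴ = U * (Uᴴ * M * U + Q) * Uᴴ := by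
      conv => lhs; rw [pt_conj_eq h1 M]
      simp only [Matrix.mul_add, Matrix.add_mul]
    rw [e, pt_det_conj h1]
    conv => lhs; rw [pt_conj_eq h1 M, pt_det_conj h1]
    exact this

lemma pt_det_super {k : ℕ} (Q : Matrix (Fin k) (Fin k) ℂ) (hQ : Q.PosSemidef) :
    ∀ M R : Matrix (Fin k) (Fin k) ℂ, M.PosSemidef → R.PosSemidef →
      (M + Q).det.re + (M + R).det.re ≤ (M + R + Q).det.re + M.det.re := by
  refine pt_induct (fun Q => ∀ M R : Matrix (Fin k) (Fin k) ℂ, M.PosSemidef → R.PosSemidef →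
      (M + Q).det.re + (M + R).det.re ≤ (M + R + Q).det.re + M.det.re) ?_ ?_ ?_ ?_ Q hQ
  · intro M R _ _; simp [add_comm]
  · intro i c hc M R hM hR
    obtain ⟨l, f, hf⟩ := pt_adj M i
    rw [pt_det_single, pt_det_single, hf, hf]
    simp only [Complex.add_re, Complex.re_ofReal_mul]
    have h := pt_det_mono _ (hR.submatrix f) _ (hM.submatrix f)
    have h' : (M.submatrix f f + R.submatrix f f) = (M + R).submatrix f f := rfl
    rw [h'] at h
    have := mul_le_mul_of_nonneg_left h hc
    linarith
  · intro Q1 Q2 hQ1 hQ2 h1 h2 M R hM hR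
    have a := h1 M R hM hR
    have b := h2 (M + Q1) R (hM.add hQ1) hR
    rw [show M + (Q1 + Q2) = M + Q1 + Q2 by abel,
      show M + R + (Q1 + Q2) = M + Q1 + R + Q2 by abel]
    rw [show M + R + Q1 = M + Q1 + R by abel] at a
    linarith
  · intro Q U h1 h2 hQ h M R hM hR
    have := h _ _ (hM.conjTranspose_mul_mul_same U) (hR.conjTranspose_mul_mul_same U)
    have e1 : M + U * Q * Uᴴ = U * (Uᴴ * M * U + Q) * Uᴴ := by
      conv => lhs; rw [pt_conj_eq h1 M]
      simp only [Matrix.mul_add, Matrix.add_mul]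
    have e2 : M + R = U * (Uᴴ * M * U + Uᴴ * R * U) * Uᴴ := by
      conv => lhs; rw [pt_conj_eq h1 M, pt_conj_eq h1 R]
      simp only [Matrix.mul_add, Matrix.add_mul]
    have e3 : M + R + U * Q * Uᴴ = U * (Uᴴ * M * U + Uᴴ * R * U + Q) * Uᴴ := by
      conv => lhs; rw [e2]
      simp only [Matrix.mul_add, Matrix.add_mul]
    rw [e3, e1, e2, pt_det_conj h1, pt_det_conj h1, pt_det_conj h1]
    have e4 : M.det = (Uᴴ * M * U).det := by
      conv => lhs; rw [pt_conj_eq h1 M, pt_det_conj h1]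
    rw [e4]
    exact this

lemma pt_main_one {k : ℕ} {W Z Y : Matrix (Fin k) (Fin k) ℂ} (hW : W.PosSemidef)
    (hZ : Z.PosSemidef) (hY : Y.PosSemidef) (hW1 : (1 - W).PosSemidef) (hZ1 : (1 - Z).PosSemidef)
    (h : (1 + Y - W - Z).PosSemidef) : Z.det.re + W.det.re ≤ 1 + Y.det.re := by
  by_cases hc : Z.det.re + W.det.re ≤ 1
  · have := pt_re hY.det_nonneg
    linarith
  push Not at hc
  have hY0 : (W + Z - 1).PosSemidef := by
    have a := (pt_det_le hW hW1).add (pt_det_le hZ hZ1)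
    have b : ((W.det + Z.det - 1) • (1 : Matrix (Fin k) (Fin k) ℂ)).PosSemidef := by
      refine PosSemidef.one.smul ?_
      have hw := Complex.le_def.1 hW.det_nonneg
      have hz := Complex.le_def.1 hZ.det_nonneg
      rw [Complex.le_def]
      simp only [Complex.zero_re, Complex.zero_im, Complex.sub_re, Complex.add_re, Complex.one_re,
        Complex.sub_im, Complex.add_im, Complex.one_im] at *
      constructor
      · linarith
      · linarith [hw.2, hz.2]
    have c := a.add b
    convert c using 1
    module
  have s := pt_det_super _ hW1 _ _ hY0 hZ1
  have mo := pt_det_mono _ h _ hY0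
  rw [show W + Z - 1 + (1 - W) = Z by abel, show W + Z - 1 + (1 - Z) = W by abel,
    show W + (1 - W) = 1 by abel, det_one, Complex.one_re] at s
  rw [show W + Z - 1 + (1 + Y - W - Z) = Y by abel] at mo
  linarith

lemma pt_main_fin {k : ℕ} {W Z Y : Matrix (Fin k) (Fin k) ℂ} (t : ℝ) (ht : 0 < t)
    (hW : W.PosSemidef)
    (hZ : Z.PosSemidef) (hY : Y.PosSemidef)
    (hW1 : ((t : ℂ) • (1 : Matrix (Fin k) (Fin k) ℂ) - W).PosSemidef)
    (hZ1 : ((t : ℂ) • (1 : Matrix (Fin k) (Fin k) ℂ) - Z).PosSemidef)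
    (h : ((t : ℂ) • (1 : Matrix (Fin k) (Fin k) ℂ) + Y - W - Z).PosSemidef) :
    Z.det.re + W.det.re ≤ t ^ k + Y.det.re := by
  have hs : (0 : ℂ) ≤ ((t⁻¹ : ℝ) : ℂ) := by
    exact_mod_cast (inv_pos.2 ht).le
  have hne : (t : ℂ) ≠ 0 := by exact_mod_cast ht.ne'
  have e : ((t⁻¹ : ℝ) : ℂ) • (t : ℂ) • (1 : Matrix (Fin k) (Fin k) ℂ) = 1 := by
    rw [smul_smul, Complex.ofReal_inv, inv_mul_cancel₀ hne, one_smul]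
  have a1 := hW1.smul hs
  have a2 := hZ1.smul hs
  have a3 := h.smul hs
  rw [smul_sub, e] at a1 a2
  rw [smul_sub, smul_sub, smul_add, e] at a3
  have := pt_main_one (hW.smul hs) (hZ.smul hs) (hY.smul hs) a1 a2 a3
  simp only [det_smul, Fintype.card_fin, ← Complex.ofReal_pow, Complex.re_ofReal_mul] at this
  have hk : 0 < t ^ k := by positivity
  rw [inv_pow] at this
  have h2 := mul_le_mul_of_nonneg_left this hk.le
  have h3 : t ^ k * ((t ^ k)⁻¹ * Z.det.re + (t ^ k)⁻¹ * W.det.re) = Z.det.re + W.det.re := by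
    field_simp
  have h4 : t ^ k * (1 + (t ^ k)⁻¹ * Y.det.re) = t ^ k + Y.det.re := by
    field_simp
  linarith

lemma pt_main {ι : Type*} [Fintype ι] [DecidableEq ι] {W Z Y : Matrix ι ι ℂ} (t : ℝ) (ht : 0 < t)
    (hW : W.PosSemidef)
    (hZ : Z.PosSemidef) (hY : Y.PosSemidef)
    (hW1 : ((t : ℂ) • (1 : Matrix ι ι ℂ) - W).PosSemidef)
    (hZ1 : ((t : ℂ) • (1 : Matrix ι ι ℂ) - Z).PosSemidef)
    (h : ((t : ℂ) • (1 : Matrix ι ι ℂ) + Y - W - Z).PosSemidef) :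
    Z.det.re + W.det.re ≤ t ^ (Fintype.card ι) + Y.det.re := by
  let f := (Fintype.equivFin ι).symm
  have e1 : (1 : Matrix ι ι ℂ).submatrix f f = 1 := submatrix_one_equiv f
  have a1 := hW1.submatrix f
  have a2 := hZ1.submatrix f
  have a3 := h.submatrix f
  simp only [submatrix_sub, submatrix_add, submatrix_smul, Pi.sub_apply, Pi.add_apply,
    Pi.smul_apply, e1] at a1 a2 a3
  have := pt_main_fin t ht (hW.submatrix f) (hZ.submatrix f) (hY.submatrix f) a1 a2 a3
  simpa only [det_submatrix_equiv_self] using this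

/-- Second partial trace. -/
def pt2 {m n : ℕ} (A : Matrix (Fin m × Fin n) (Fin m × Fin n) ℂ) : Matrix (Fin m) (Fin m) ℂ :=
  Matrix.of fun i j : Fin m => ∑ r : Fin n, A (i, r) (j, r)

/-- First partial trace. -/
def pt1 {m n : ℕ} (A : Matrix (Fin m × Fin n) (Fin m × Fin n) ℂ) : Matrix (Fin n) (Fin n) ℂ :=
  Matrix.of fun p q : Fin n => ∑ k : Fin m, A (k, p) (k, q)

lemma pt2_pos {m n : ℕ} {A : Matrix (Fin m × Fin n) (Fin m × Fin n) ℂ} (hA : A.PosSemidef) :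
    (pt2 A).PosSemidef := by
  have : pt2 A = ∑ r : Fin n, A.submatrix (fun i => (i, r)) (fun i => (i, r)) := by
    ext i j; simp [pt2, Matrix.sum_apply]
  rw [this]
  exact posSemidef_sum _ fun r _ => hA.submatrix _

lemma pt1_pos {m n : ℕ} {A : Matrix (Fin m × Fin n) (Fin m × Fin n) ℂ} (hA : A.PosSemidef) :
    (pt1 A).PosSemidef := by
  have : pt1 A = ∑ r : Fin m, A.submatrix (fun i => (r, i)) (fun i => (r, i)) := by
    ext i j; simp [pt1, Matrix.sum_apply]
  rw [this]
  exact posSemidef_sum _ fun r _ => hA.submatrix _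

lemma pt2_trace {m n : ℕ} (A : Matrix (Fin m × Fin n) (Fin m × Fin n) ℂ) :
    (pt2 A).trace = A.trace := by
  simp [pt2, trace, Fintype.sum_prod_type]

/-- The basic summand. -/
def ptS {m n : ℕ} (A : Matrix (Fin m × Fin n) (Fin m × Fin n) ℂ) (y : Fin m × Fin n → ℂ)
    (l k : Fin m) (p q : Fin n) : ℂ :=
  y (k, q) * A (l, p) (l, p) * star (y (k, q)) - y (k, q) * A (l, p) (k, p) * star (y (l, q))
  + y (k, q) * A (l, p) (l, q) * star (y (k, p)) - y (k, q) * A (l, p) (k, q) * star (y (l, p))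

lemma ptS_nonneg {m n : ℕ} {A : Matrix (Fin m × Fin n) (Fin m × Fin n) ℂ} (hA : A.PosSemidef)
    (y : Fin m × Fin n → ℂ) (l k : Fin m) (p q : Fin n) :
    0 ≤ ptS A y l k p q + ptS A y k l p q + ptS A y l k q p + ptS A y k l q p := by
  have := (hA.submatrix ![(l, p), (k, p), (l, q), (k, q)]).dotProduct_mulVec_nonneg
    ![star (y (k, q)), -star (y (l, q)), star (y (k, p)), -star (y (l, p))]
  convert this using 1
  simp [ptS, dotProduct, mulVec, Fin.sum_univ_four]
  ring

lemma ptS_sum_nonneg {m n : ℕ} {A : Matrix (Fin m × Fin n) (Fin m × Fin n) ℂ}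
    (hA : A.PosSemidef) (y : Fin m × Fin n → ℂ) :
    0 ≤ ∑ l, ∑ k, ∑ p, ∑ q, ptS A y l k p q := by
  have h : 0 ≤ ∑ l, ∑ k, ∑ p, ∑ q,
      (ptS A y l k p q + ptS A y k l p q + ptS A y l k q p + ptS A y k l q p) :=
    Finset.sum_nonneg fun l _ => Finset.sum_nonneg fun k _ => Finset.sum_nonneg fun p _ =>
      Finset.sum_nonneg fun q _ => ptS_nonneg hA y l k p q
  simp only [Finset.sum_add_distrib] at h
  have e1 : ∑ l, ∑ k, ∑ p, ∑ q, ptS A y k l p q = ∑ l, ∑ k, ∑ p, ∑ q, ptS A y l k p q :=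
    Finset.sum_comm
  have e2 : ∑ l, ∑ k, ∑ p, ∑ q, ptS A y l k q p = ∑ l, ∑ k, ∑ p, ∑ q, ptS A y l k p q :=
    Finset.sum_congr rfl fun l _ => Finset.sum_congr rfl fun k _ => Finset.sum_comm
  have e3 : ∑ l, ∑ k, ∑ p, ∑ q, ptS A y k l q p = ∑ l, ∑ k, ∑ p, ∑ q, ptS A y l k p q := by
    rw [← e2]
    exact Finset.sum_comm
  rw [e1, e2, e3, Complex.le_def] at h
  rw [Complex.le_def]
  simp only [Complex.add_re, Complex.add_im, Complex.zero_re, Complex.zero_im] at h ⊢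
  constructor
  · linarith [h.1]
  · linarith [h.2]

lemma pt_key {m n : ℕ} {A : Matrix (Fin m × Fin n) (Fin m × Fin n) ℂ} (hA : A.PosSemidef) :
    (A.trace • (1 : Matrix (Fin m × Fin n) (Fin m × Fin n) ℂ)
      + (1 : Matrix (Fin m) (Fin m) ℂ) ⊗ₖ pt1 A
      - pt2 A ⊗ₖ (1 : Matrix (Fin n) (Fin n) ℂ) - A).PosSemidef := by
  refine PosSemidef.of_dotProduct_mulVec_nonneg ?_ ?_
  · refine IsHermitian.sub (IsHermitian.sub (IsHermitian.add ?_ ?_) ?_) hA.1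
    · exact (PosSemidef.one.smul hA.trace_nonneg).1
    · exact (PosSemidef.one.kronecker (pt1_pos hA)).1
    · exact ((pt2_pos hA).kronecker PosSemidef.one).1
  intro y
  have h := ptS_sum_nonneg hA y
  convert h using 1
  simp only [sub_mulVec, add_mulVec, dotProduct_sub, dotProduct_add]
  simp only [ptS, Finset.sum_add_distrib, Finset.sum_sub_distrib]
  have e1 : star y ⬝ᵥ (A.trace • (1 : Matrix (Fin m × Fin n) (Fin m × Fin n) ℂ)) *ᵥ y
      = ∑ l, ∑ k, ∑ p, ∑ q, y (k, q) * A (l, p) (l, p) * star (y (k, q)) := by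
    rw [smul_mulVec, one_mulVec, dotProduct_smul, smul_eq_mul]
    simp only [trace, dotProduct, diag_apply, Fintype.sum_prod_type, Finset.sum_mul,
      Finset.mul_sum]
    refine Eq.trans ?_ Finset.sum_comm
    refine Finset.sum_congr rfl fun l _ => ?_
    rw [Finset.sum_comm]
    refine Finset.sum_congr rfl fun k _ => ?_
    refine Eq.trans ?_ Finset.sum_comm
    refine Finset.sum_congr rfl fun p _ => ?_
    refine Finset.sum_congr rfl fun q _ => ?_
    simp only [Pi.star_apply]; ring
  have e2 : star y ⬝ᵥ (pt2 A ⊗ₖ (1 : Matrix (Fin n) (Fin n) ℂ)) *ᵥ y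
      = ∑ l, ∑ k, ∑ p, ∑ q, y (k, q) * A (l, p) (k, p) * star (y (l, q)) := by
    simp only [pt2, dotProduct, mulVec, kroneckerMap_apply, Matrix.of_apply, one_apply,
      Fintype.sum_prod_type, Finset.sum_mul, Finset.mul_sum, mul_ite, ite_mul, mul_one, mul_zero,
      zero_mul, Finset.sum_ite_eq, Finset.mem_univ, if_true]
    refine Finset.sum_congr rfl fun l _ => ?_
    rw [Finset.sum_comm]
    refine Finset.sum_congr rfl fun k _ => ?_
    rw [Finset.sum_comm]
    refine Finset.sum_congr rfl fun p _ => ?_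
    refine Finset.sum_congr rfl fun q _ => ?_
    simp only [Pi.star_apply]; ring
  have e3 : star y ⬝ᵥ ((1 : Matrix (Fin m) (Fin m) ℂ) ⊗ₖ pt1 A) *ᵥ y
      = ∑ l, ∑ k, ∑ p, ∑ q, y (k, q) * A (l, p) (l, q) * star (y (k, p)) := by
    have hk : ∀ k p, (((1 : Matrix (Fin m) (Fin m) ℂ) ⊗ₖ pt1 A) *ᵥ y) (k, p)
        = ∑ l, ∑ q, A (l, p) (l, q) * y (k, q) := by
      intro k p
      simp only [mulVec, dotProduct, kroneckerMap_apply, Fintype.sum_prod_type]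
      rw [Finset.sum_eq_single k]
      · rw [Finset.sum_comm]
        refine Finset.sum_congr rfl fun q _ => ?_
        simp [pt1, Finset.sum_mul]
      · intro b _ hb
        simp [one_apply_ne hb.symm]
      · simp
    simp only [dotProduct, Fintype.sum_prod_type, hk, Finset.mul_sum]
    refine Eq.trans ?_ Finset.sum_comm
    refine Finset.sum_congr rfl fun k _ => ?_
    rw [Finset.sum_comm]
    refine Finset.sum_congr rfl fun l _ => ?_
    refine Finset.sum_congr rfl fun p _ => ?_
    refine Finset.sum_congr rfl fun q _ => ?_
    simp only [Pi.star_apply]; ring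
  have e4 : star y ⬝ᵥ A *ᵥ y
      = ∑ l, ∑ k, ∑ p, ∑ q, y (k, q) * A (l, p) (k, q) * star (y (l, p)) := by
    simp only [dotProduct, mulVec, Fintype.sum_prod_type, Finset.mul_sum]
    refine Finset.sum_congr rfl fun l _ => ?_
    rw [Finset.sum_comm]
    refine Finset.sum_congr rfl fun k _ => ?_
    refine Finset.sum_congr rfl fun p _ => ?_
    refine Finset.sum_congr rfl fun q _ => ?_
    simp only [Pi.star_apply]; ring
  rw [e1, e2, e3, e4]
  ring

/-- Inequality (7) of the paper: for a positive semidefinite block matrix `A ∈ M_m(M_n)`,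
`(tr A)^{mn} + det(tr₁ A)^m ≥ det A + det(tr₂ A)^n`, where
`tr₁ A = ∑ᵢ A_{i,i}` and `tr₂ A = [tr A_{i,j}]`. -/
theorem trace_pow_add_det_trace1_ge_det_add_det_trace2
    (m n : ℕ) (A : Matrix (Fin m × Fin n) (Fin m × Fin n) ℂ)
    (hA : A.PosSemidef) :
    A.det.re + ((Matrix.of fun i j : Fin m => ∑ r : Fin n, A (i, r) (j, r)).det.re) ^ n
      ≤ A.trace.re ^ (m * n)
        + ((Matrix.of fun p q : Fin n => ∑ k : Fin m, A (k, p) (k, q)).det.re) ^ m := by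
  change A.det.re + ((pt2 A).det.re) ^ n ≤ A.trace.re ^ (m * n) + ((pt1 A).det.re) ^ m
  have real : ∀ {z : ℂ}, 0 ≤ z → z = (z.re : ℂ) := by
    intro z hz
    apply Complex.ext
    · simp
    · simpa using (Complex.le_def.1 hz).2.symm
  have d2 : (pt2 A ⊗ₖ (1 : Matrix (Fin n) (Fin n) ℂ)).det.re = (pt2 A).det.re ^ n := by
    rw [det_kronecker, det_one, one_pow, mul_one, Fintype.card_fin,
      real (pt2_pos hA).det_nonneg, ← Complex.ofReal_pow, Complex.ofReal_re, Complex.ofReal_re]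
  have d1 : ((1 : Matrix (Fin m) (Fin m) ℂ) ⊗ₖ pt1 A).det.re = (pt1 A).det.re ^ m := by
    rw [det_kronecker, det_one, one_pow, one_mul, Fintype.card_fin,
      real (pt1_pos hA).det_nonneg, ← Complex.ofReal_pow, Complex.ofReal_re, Complex.ofReal_re]
  have htr := real hA.trace_nonneg
  rcases (pt_re hA.trace_nonneg).eq_or_lt with h0 | hpos
  · have hA0 : A = 0 := by
      rw [← hA.trace_eq_zero_iff, htr, ← h0]; simp
    have z1 : pt1 A = 0 := by ext; simp [pt1, hA0]
    have z2 : pt2 A = 0 := by ext; simp [pt2, hA0]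
    have hx : A.trace.re ^ (m * n) = A.det.re := by
      rw [← h0, hA0]
      have : (0 : Matrix (Fin m × Fin n) (Fin m × Fin n) ℂ)
          = (0 : ℂ) • (1 : Matrix (Fin m × Fin n) (Fin m × Fin n) ℂ) := by simp
      rw [this, det_smul, det_one, mul_one, Fintype.card_prod, Fintype.card_fin, Fintype.card_fin,
        ← Complex.ofReal_zero, ← Complex.ofReal_pow, Complex.ofReal_re]
    rw [hx, ← d1, ← d2, z1, z2]
    simp
  · have h2 : (A.trace • (1 : Matrix (Fin m × Fin n) (Fin m × Fin n) ℂ)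
        - pt2 A ⊗ₖ (1 : Matrix (Fin n) (Fin n) ℂ)).PosSemidef := by
      have := (pt_trace (pt2_pos hA)).kronecker
        (PosSemidef.one : (1 : Matrix (Fin n) (Fin n) ℂ).PosSemidef)
      have e : (A.trace • (1 : Matrix (Fin m) (Fin m) ℂ) - pt2 A) ⊗ₖ
          (1 : Matrix (Fin n) (Fin n) ℂ)
          = A.trace • (1 : Matrix (Fin m × Fin n) (Fin m × Fin n) ℂ)
            - pt2 A ⊗ₖ (1 : Matrix (Fin n) (Fin n) ℂ) := by
        rw [← one_kronecker_one, ← smul_kronecker]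
        ext i j
        simp only [kroneckerMap_apply, Matrix.sub_apply, sub_mul]
      rwa [pt2_trace, e] at this
    have h3 := pt_trace hA
    have h1 := pt_key hA
    rw [htr] at h1 h2 h3
    have := pt_main _ hpos ((pt2_pos hA).kronecker PosSemidef.one) hA
      (PosSemidef.one.kronecker (pt1_pos hA)) h2 h3 h1
    rw [d1, d2, Fintype.card_prod, Fintype.card_fin, Fintype.card_fin] at this
    exact this
end

section
/- Let A = [A_{i,j}]_{i,j=1}^m ∈ M_m(M_n) be positive semidefinite. Then in the Löwner ordering, (tr A)·(I_m ⊗ I_n) + I_m ⊗ (tr₁ A) − A − (tr₂ A) ⊗ I_n is positive semidefinite; equivalently, (tr A)·(I_m ⊗ I_n) − (tr₂ A) ⊗ I_n ≥ A − I_m ⊗ (tr₁ A). -/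
open Matrix BigOperators ComplexOrder Kronecker

/-- Kraus operators of the (co-positive) map `(Tr - id) ⊗ (Tr + id)`. -/
noncomputable def krausW {m n : ℕ} (i j : Fin m) (p q : Fin n) :
    Matrix (Fin m × Fin n) (Fin m × Fin n) ℂ :=
  single (i, p) (j, q) 1 + single (i, q) (j, p) 1 - single (j, p) (i, q) 1
    - single (j, q) (i, p) 1

/-- **Proposition 2.2.** For a positive semidefinite block matrix `A ∈ M_m(M_n)`,
`(tr A)·(I_m ⊗ I_n) + I_m ⊗ (tr₁ A) - A - (tr₂ A) ⊗ I_n ≥ 0` in the Löwner ordering. -/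
theorem trace_smul_one_add_one_kron_trace1_sub_sub_trace2_kron_one_posSemidef
    (m n : ℕ) (A : Matrix (Fin m × Fin n) (Fin m × Fin n) ℂ)
    (hA : A.PosSemidef) :
    (A.trace • (1 : Matrix (Fin m × Fin n) (Fin m × Fin n) ℂ)
      + (1 : Matrix (Fin m) (Fin m) ℂ) ⊗ₖ (Matrix.of fun p q : Fin n => ∑ k : Fin m, A (k, p) (k, q))
      - A
      - (Matrix.of fun i j : Fin m => ∑ r : Fin n, A (i, r) (j, r)) ⊗ₖ (1 : Matrix (Fin n) (Fin n) ℂ)).PosSemidef := by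
  have key : (∑ i : Fin m, ∑ j : Fin m, ∑ p : Fin n, ∑ q : Fin n,
      krausW i j p q * Aᵀ * (krausW i j p q)ᴴ) = (4 : ℂ) • 
      (A.trace • (1 : Matrix (Fin m × Fin n) (Fin m × Fin n) ℂ)
      + (1 : Matrix (Fin m) (Fin m) ℂ) ⊗ₖ (Matrix.of fun p q : Fin n => ∑ k : Fin m, A (k, p) (k, q))
      - A
      - (Matrix.of fun i j : Fin m => ∑ r : Fin n, A (i, r) (j, r)) ⊗ₖ (1 : Matrix (Fin n) (Fin n) ℂ)) := by
    ext ⟨a, b⟩ ⟨c, d⟩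
    simp only [krausW, conjTranspose_sub, conjTranspose_add, conjTranspose_single, star_one,
      add_mul, sub_mul, mul_add, mul_sub, single_mul_mul_single, Matrix.sum_apply,
      Matrix.add_apply, Matrix.sub_apply, one_mul, mul_one, transpose_apply, single_apply,
      Prod.mk.injEq, Matrix.smul_apply, kroneckerMap_apply, of_apply, Matrix.one_apply,
      Matrix.trace, diag_apply, Fintype.sum_prod_type, smul_eq_mul]
    simp only [Finset.sum_add_distrib, Finset.sum_sub_distrib, ite_and, Finset.sum_ite_irrel,
      Finset.sum_ite_eq, Finset.sum_ite_eq', Finset.mem_univ, if_true, Finset.sum_const_zero]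
    by_cases hac : a = c <;> by_cases hbd : b = d <;> simp [hac, hbd, Finset.sum_ite_eq, eq_comm] <;> ring
  have h : (∑ i : Fin m, ∑ j : Fin m, ∑ p : Fin n, ∑ q : Fin n,
      krausW i j p q * Aᵀ * (krausW i j p q)ᴴ).PosSemidef := by
    refine posSemidef_sum _ fun i _ => posSemidef_sum _ fun j _ => posSemidef_sum _ fun p _ =>
      posSemidef_sum _ fun q _ => ?_
    exact hA.transpose.mul_mul_conjTranspose_same _
  rw [key] at h
  have h4 : (0 : ℂ) ≤ (1 / 4 : ℂ) := by
    rw [Complex.le_def]; norm_num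
  have := h.smul h4
  rwa [smul_smul, show (1 / 4 : ℂ) * 4 = 1 by norm_num, one_smul] at this
end

section
/- Let A = [[A_{1,1}, A_{1,2}], [A_{2,1}, A_{2,2}]] be a positive semidefinite 2×2 block matrix with each block A_{i,j} ∈ M_n(ℂ). Then the 2×2 block matrix H = [[(tr A_{2,2})·I_n + A_{2,2}, −A_{1,2} − (tr A_{1,2})·I_n], [−A_{2,1} − (tr A_{2,1})·I_n, (tr A_{1,1})·I_n + A_{1,1}]] is positive semidefinite. -/
open Matrix ComplexOrder

open scoped MatrixOrder Matrix.Norms.L2Operator in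
theorem aux_factor {m : Type} [Fintype m] [DecidableEq m] {A : Matrix m m ℂ}
    (hA : A.PosSemidef) : ∃ B : Matrix m m ℂ, A = Bᴴ * B :=
  CStarAlgebra.nonneg_iff_eq_star_mul_self.mp hA.nonneg

/-- Auxiliary factor: `w + swap w` where `w = x ⊗ b - y ⊗ a`. -/
noncomputable def auxM (n : ℕ) (a b : Fin n → ℂ) :
    Matrix (Fin n × Fin n) (Fin n ⊕ Fin n) ℂ :=
  fun ij p => Sum.elim
    (fun p => (if ij.1 = p then b ij.2 else 0) + (if ij.2 = p then b ij.1 else 0))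
    (fun p => -((if ij.1 = p then a ij.2 else 0) + (if ij.2 = p then a ij.1 else 0))) p

theorem aux_sum (n : ℕ) (c d : Fin n → ℂ) (p q : Fin n) :
    ∑ i, ∑ j, star ((if i = p then c j else 0) + (if j = p then c i else 0)) *
      ((if i = q then d j else 0) + (if j = q then d i else 0)) =
    2 * ((if p = q then ∑ j, star (c j) * d j else 0) + star (c q) * d p) := by
  simp only [star_add, add_mul, mul_add, Finset.sum_add_distrib, apply_ite star, star_zero,
    ite_mul, mul_ite, zero_mul, mul_zero]
  have h1 : ∀ f : Fin n → Fin n → ℂ, ∑ i, ∑ j, (if i = p then f i j else 0) = ∑ j, f p j := by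
    intro f
    rw [Finset.sum_comm]
    simp [Finset.sum_add_distrib]
  have h2 : ∀ f : Fin n → Fin n → ℂ, ∑ i, ∑ j, (if i = q then f i j else 0) = ∑ j, f q j := by
    intro f
    rw [Finset.sum_comm]
    simp [Finset.sum_add_distrib]
  simp only [h1, h2, Finset.sum_ite_eq', Finset.mem_univ, if_true]
  by_cases h : p = q
  · subst h
    simp [Finset.sum_add_distrib]
    ring
  · have h' : ¬ q = p := fun e => h e.symm
    simp [h, h']
    ring

/-- Inequality (8) in the proof of Proposition 2.2: if the 2×2 block matrix
`[[A₁₁, A₁₂], [A₂₁, A₂₂]]` (with `n×n` complex blocks) is positive semidefinite, then so is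
`H = [[(tr A₂₂)I + A₂₂, -A₁₂ - (tr A₁₂)I], [-A₂₁ - (tr A₂₁)I, (tr A₁₁)I + A₁₁]]`. -/
theorem H_posSemidef_of_two_by_two_block_posSemidef
    (n : ℕ) (A11 A12 A21 A22 : Matrix (Fin n) (Fin n) ℂ)
    (hA : (Matrix.fromBlocks A11 A12 A21 A22).PosSemidef) :
    (Matrix.fromBlocks
        (A22.trace • (1 : Matrix (Fin n) (Fin n) ℂ) + A22)
        (-A12 - A12.trace • (1 : Matrix (Fin n) (Fin n) ℂ))
        (-A21 - A21.trace • (1 : Matrix (Fin n) (Fin n) ℂ))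
        (A11.trace • (1 : Matrix (Fin n) (Fin n) ℂ) + A11)).PosSemidef := by
  obtain ⟨B, hB⟩ := aux_factor hA
  have e : ∀ p q, Matrix.fromBlocks A11 A12 A21 A22 p q = ∑ k, star (B k p) * B k q := by
    intro p q
    rw [hB]
    simp [Matrix.mul_apply]
  have e11 : ∀ p q, A11 p q = ∑ k, star (B k (.inl p)) * B k (.inl q) :=
    fun p q => e (.inl p) (.inl q)
  have e12 : ∀ p q, A12 p q = ∑ k, star (B k (.inl p)) * B k (.inr q) :=
    fun p q => e (.inl p) (.inr q)
  have e21 : ∀ p q, A21 p q = ∑ k, star (B k (.inr p)) * B k (.inl q) :=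
    fun p q => e (.inr p) (.inl q)
  have e22 : ∀ p q, A22 p q = ∑ k, star (B k (.inr p)) * B k (.inr q) :=
    fun p q => e (.inr p) (.inr q)
  let M := fun k => auxM n (fun i => star (B k (.inl i))) (fun i => star (B k (.inr i)))
  have hM : (∑ k, (M k)ᴴ * M k).PosSemidef :=
    Matrix.posSemidef_sum _ fun k _ => Matrix.posSemidef_conjTranspose_mul_self _
  have h2 : (0 : ℂ) ≤ 1 / 2 := by
    rw [Complex.le_def]; norm_num
  convert hM.smul h2 using 1
  have key : ∀ X Y : Fin n → (Fin n ⊕ Fin n), ∀ p q,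
      (if p = q then ∑ j, ∑ k, star (B k (Y j)) * B k (X j) else 0)
        + ∑ k, star (B k (Y p)) * B k (X q) =
      (1 / 2) * ∑ k, ∑ i, ∑ j,
        star ((if i = p then star (B k (X j)) else 0) + (if j = p then star (B k (X i)) else 0)) *
        ((if i = q then star (B k (Y j)) else 0) + (if j = q then star (B k (Y i)) else 0)) := by
    intro X Y p q
    simp only [aux_sum n (fun j => star (B _ (X j))) (fun j => star (B _ (Y j))), star_star]
    rw [← Finset.mul_sum, Finset.sum_add_distrib, Finset.sum_comm]
    by_cases h : p = q
    · subst h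
      simp [mul_comm]
    · simp [h, mul_comm]
  ext p q
  rcases p with p | p <;> rcases q with q | q
  · have := key .inr .inr p q
    simp only [Matrix.fromBlocks_apply₁₁, Matrix.add_apply, Matrix.smul_apply, Matrix.one_apply,
      Matrix.trace, Matrix.diag, e22, Matrix.sum_apply, Matrix.mul_apply, Fintype.sum_prod_type,
      Matrix.conjTranspose_apply, M, auxM, Sum.elim_inl, smul_eq_mul, mul_ite, mul_one, mul_zero]
    exact this
  · have := key .inr .inl p q
    simp only [Matrix.fromBlocks_apply₁₂, Matrix.sub_apply, Matrix.neg_apply, Matrix.smul_apply,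
      Matrix.one_apply,
      Matrix.trace, Matrix.diag, e12, Matrix.sum_apply, Matrix.mul_apply, Fintype.sum_prod_type,
      Matrix.conjTranspose_apply, M, auxM, Sum.elim_inl, Sum.elim_inr, smul_eq_mul, mul_ite,
      mul_one, mul_zero, mul_neg, Finset.sum_neg_distrib]
    rw [← this]
    ring
  · have := key .inl .inr p q
    simp only [Matrix.fromBlocks_apply₂₁, Matrix.sub_apply, Matrix.neg_apply, Matrix.smul_apply,
      Matrix.one_apply,
      Matrix.trace, Matrix.diag, e21, Matrix.sum_apply, Matrix.mul_apply, Fintype.sum_prod_type,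
      Matrix.conjTranspose_apply, M, auxM, Sum.elim_inl, Sum.elim_inr, smul_eq_mul, mul_ite,
      mul_one, mul_zero, star_neg, neg_mul, mul_neg, Finset.sum_neg_distrib]
    rw [← this]
    ring
  · have := key .inl .inl p q
    simp only [Matrix.fromBlocks_apply₂₂, Matrix.add_apply, Matrix.smul_apply, Matrix.one_apply,
      Matrix.trace, Matrix.diag, e11, Matrix.sum_apply, Matrix.mul_apply, Fintype.sum_prod_type,
      Matrix.conjTranspose_apply, M, auxM, Sum.elim_inr, smul_eq_mul, mul_ite, mul_one, mul_zero,
      star_neg, neg_mul, mul_neg, neg_neg]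
    exact this
end

section
/- Let A = [A_{i,j}]_{i,j=1}^m ∈ M_m(M_n) be positive semidefinite. Then the block matrix [Φ(A_{i,j})]_{i,j=1}^m, where Φ(X) = (tr X)·I_n + X, is also positive semidefinite. (That is, the map Φ(X) = (tr X)I + X is m-positive for every m, i.e., completely positive.) -/
open Matrix BigOperators ComplexOrder

/-- The map `Φ(X) = (tr X)·I + X` is completely positive (`m`-positive for every `m`):
if `A = [A_{i,j}] ∈ M_m(M_n)` is positive semidefinite, then so is the block matrix
`[Φ(A_{i,j})]_{i,j=1}^m`. -/
theorem phi_block_apply_posSemidef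
    (m n : ℕ) (A : Matrix (Fin m × Fin n) (Fin m × Fin n) ℂ)
    (hA : A.PosSemidef) :
    (Matrix.of fun p q : Fin m × Fin n =>
      (∑ r : Fin n, A (p.1, r) (q.1, r)) * (1 : Matrix (Fin n) (Fin n) ℂ) p.2 q.2
        + A p q).PosSemidef := by
  have hB : (∑ r : Fin n, A.submatrix (fun i : Fin m => (i, r)) (fun i : Fin m => (i, r))).PosSemidef :=
    Matrix.posSemidef_sum _ fun r _ => hA.submatrix _
  have hK : (Matrix.kroneckerMap (fun a b : ℂ => a * b)
      (∑ r : Fin n, A.submatrix (fun i : Fin m => (i, r)) (fun i : Fin m => (i, r)))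
      (1 : Matrix (Fin n) (Fin n) ℂ) + A).PosSemidef :=
    Matrix.PosSemidef.add (hB.kronecker (Matrix.PosSemidef.one (n := Fin n) (R := ℂ))) hA
  have hE : (Matrix.of fun p q : Fin m × Fin n =>
      (∑ r : Fin n, A (p.1, r) (q.1, r)) * (1 : Matrix (Fin n) (Fin n) ℂ) p.2 q.2
        + A p q) = Matrix.kroneckerMap (fun a b : ℂ => a * b)
      (∑ r : Fin n, A.submatrix (fun i : Fin m => (i, r)) (fun i : Fin m => (i, r)))
      (1 : Matrix (Fin n) (Fin n) ℂ) + A := by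
    ext p q
    simp [Matrix.kroneckerMap_apply, Matrix.sum_apply]
  rw [hE]
  exact hK
end

section
/- Let A = [A_{i,j}]_{i,j=1}^m ∈ M_m(M_n) be positive semidefinite. Then the block matrix [Φ(A_{j,i})]_{i,j=1}^m, where Φ(X) = (tr X)·I_n + X, is also positive semidefinite. (That is, the map Φ(X) = (tr X)I + X is m-copositive for every m, i.e., completely copositive.) -/
open Matrix BigOperators ComplexOrder

/-- **Lemma 2.1** (essentially): the map `Φ(X) = (tr X)·I + X` is completely copositive
(`m`-copositive for every `m`): if `A = [A_{i,j}] ∈ M_m(M_n)` is positive semidefinite,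
then the block matrix `[Φ(A_{j,i})]_{i,j=1}^m` is positive semidefinite. -/
theorem phi_block_transpose_apply_posSemidef
    (m n : ℕ) (A : Matrix (Fin m × Fin n) (Fin m × Fin n) ℂ)
    (hA : A.PosSemidef) :
    (Matrix.of fun p q : Fin m × Fin n =>
      (∑ r : Fin n, A (q.1, r) (p.1, r)) * (1 : Matrix (Fin n) (Fin n) ℂ) p.2 q.2
        + A (q.1, p.2) (p.1, q.2)).PosSemidef := by
  let K : Fin n → Fin n → Matrix (Fin m × Fin n) (Fin m × Fin n) ℂ := fun r s =>
    Matrix.of fun p q => (if p = (q.1, s) then (if q.2 = r then 1 else 0) else 0)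
      + (if p = (q.1, r) then (if q.2 = s then 1 else 0) else 0)
  have hK : ∀ r s p q, ((K r s)ᴴ * Aᵀ * K r s) p q =
      (if p.2 = r then 1 else 0) * (if q.2 = r then 1 else 0) * A (q.1, s) (p.1, s)
      + (if p.2 = r then 1 else 0) * (if q.2 = s then 1 else 0) * A (q.1, r) (p.1, s)
      + (if p.2 = s then 1 else 0) * (if q.2 = r then 1 else 0) * A (q.1, s) (p.1, r)
      + (if p.2 = s then 1 else 0) * (if q.2 = s then 1 else 0) * A (q.1, r) (p.1, r) := by
    intro r s p q
    simp only [K, Matrix.mul_apply, Matrix.conjTranspose_apply, Matrix.of_apply,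
      Matrix.transpose_apply, star_add, apply_ite star, star_one, star_zero, add_mul, mul_add,
      Finset.sum_add_distrib, ite_mul, mul_ite, zero_mul, mul_zero, one_mul, mul_one,
      Finset.sum_ite_eq', Finset.sum_ite_eq, Finset.mem_univ, if_true]
    split_ifs <;> ring
  have h : (∑ r, ∑ s, (K r s)ᴴ * Aᵀ * K r s).PosSemidef :=
    Matrix.posSemidef_sum _ fun r _ => Matrix.posSemidef_sum _ fun s _ =>
      hA.transpose.conjTranspose_mul_mul_same (K r s)
  have h2 := h.smul (show (0 : ℂ) ≤ 1 / 2 by positivity)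
  convert h2 using 1
  ext p q
  simp only [Matrix.smul_apply, Matrix.sum_apply, hK, Matrix.of_apply, Finset.sum_add_distrib,
    ite_mul, mul_ite, zero_mul, mul_zero, one_mul, mul_one, smul_eq_mul, Matrix.one_apply,
    Finset.sum_ite_eq', Finset.sum_ite_eq, Finset.mem_univ, if_true, Finset.sum_ite_irrel,
    Finset.sum_const_zero]
  by_cases hpq : p.2 = q.2
  · simp [hpq]; ring
  · simp [hpq, Ne.symm hpq]; ring
end

section
/- If [[A_{1,1}, A_{1,2}], [A_{2,1}, A_{2,2}]] is a positive semidefinite 2×2 block matrix with n×n complex blocks, then the block matrix [[(tr A_{1,1})·I_n + A_{1,1}, (tr A_{2,1})·I_n + A_{2,1}], [(tr A_{1,2})·I_n + A_{1,2}, (tr A_{2,2})·I_n + A_{2,2}]] is positive semidefinite. -/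
open Matrix ComplexOrder

open scoped MatrixOrder Matrix.Norms.L2Operator in
/-- A positive semidefinite matrix is a Gram matrix. -/
lemma aux_gram {K : Type*} [Fintype K] [DecidableEq K] {A : Matrix K K ℂ} (hA : A.PosSemidef) :
    ∃ B : Matrix K K ℂ, A = Bᴴ * B :=
  CStarAlgebra.nonneg_iff_eq_star_mul_self.mp hA.nonneg

/-- Auxiliary identity: contracting the symmetrised tensors. -/
lemma aux_sum_s6 {K : Type*} [Fintype K] (n : ℕ) (f g : K → Fin n → ℂ) (l m : Fin n) :
    ∑ p : K × Fin n × Fin n,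
      star (star (f p.1 p.2.1) * (if p.2.2 = l then 1 else 0)
        + star (f p.1 p.2.2) * (if p.2.1 = l then 1 else 0))
      * (star (g p.1 p.2.1) * (if p.2.2 = m then 1 else 0)
        + star (g p.1 p.2.2) * (if p.2.1 = m then 1 else 0))
    = 2 * ((∑ i, ∑ k, star (g k i) * f k i) * (if l = m then 1 else 0)
        + ∑ k, star (g k l) * f k m) := by
  rw [Fintype.sum_prod_type, Finset.sum_comm (s := Finset.univ (α := Fin n)), Finset.sum_mul,
    ← Finset.sum_add_distrib, Finset.mul_sum]
  refine Finset.sum_congr rfl fun k _ => ?_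
  rw [Fintype.sum_prod_type]
  simp only [star_add, star_star, add_mul, mul_add, apply_ite star, star_zero,
    Finset.sum_add_distrib, mul_ite, ite_mul, mul_one, mul_zero, zero_mul, Finset.sum_ite_eq',
    Finset.mem_univ, if_true, Finset.sum_ite_irrel, Finset.sum_const_zero]
  by_cases h : l = m
  · subst h
    simp [mul_comm]
    ring
  · simp [h, Ne.symm h, mul_comm]
    ring

/-- The map `Φ(X) = (tr X)·I + X` is 2-copositive: if `[[A₁₁, A₁₂], [A₂₁, A₂₂]]` is a
positive semidefinite 2×2 block matrix with `n×n` complex blocks, then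
`[[(tr A₁₁)I + A₁₁, (tr A₂₁)I + A₂₁], [(tr A₁₂)I + A₁₂, (tr A₂₂)I + A₂₂]]`
is positive semidefinite. -/
theorem phi_two_copositive
    (n : ℕ) (A11 A12 A21 A22 : Matrix (Fin n) (Fin n) ℂ)
    (hA : (Matrix.fromBlocks A11 A12 A21 A22).PosSemidef) :
    (Matrix.fromBlocks
        (A11.trace • (1 : Matrix (Fin n) (Fin n) ℂ) + A11)
        (A21.trace • (1 : Matrix (Fin n) (Fin n) ℂ) + A21)
        (A12.trace • (1 : Matrix (Fin n) (Fin n) ℂ) + A12)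
        (A22.trace • (1 : Matrix (Fin n) (Fin n) ℂ) + A22)).PosSemidef := by
  classical
  obtain ⟨B, hB⟩ := aux_gram hA
  have hE : ∀ p q, fromBlocks A11 A12 A21 A22 p q = ∑ k, star (B k p) * B k q := by
    intro p q
    rw [hB]
    simp [Matrix.mul_apply]
  have h11 : ∀ i j, A11 i j = ∑ k, star (B k (Sum.inl i)) * B k (Sum.inl j) :=
    fun i j => hE (Sum.inl i) (Sum.inl j)
  have h12 : ∀ i j, A12 i j = ∑ k, star (B k (Sum.inl i)) * B k (Sum.inr j) :=
    fun i j => hE (Sum.inl i) (Sum.inr j)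
  have h21 : ∀ i j, A21 i j = ∑ k, star (B k (Sum.inr i)) * B k (Sum.inl j) :=
    fun i j => hE (Sum.inr i) (Sum.inl j)
  have h22 : ∀ i j, A22 i j = ∑ k, star (B k (Sum.inr i)) * B k (Sum.inr j) :=
    fun i j => hE (Sum.inr i) (Sum.inr j)
  let row : (Fin n → Fin n ⊕ Fin n) → Matrix ((Fin n ⊕ Fin n) × Fin n × Fin n) (Fin n) ℂ :=
    fun e p l => star (B p.1 (e p.2.1)) * (if p.2.2 = l then 1 else 0)
        + star (B p.1 (e p.2.2)) * (if p.2.1 = l then 1 else 0)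
  let C : Matrix ((Fin n ⊕ Fin n) × Fin n × Fin n) (Fin n ⊕ Fin n) ℂ :=
    fun p => Sum.elim (row Sum.inl p) (row Sum.inr p)
  have hC : (Cᴴ * C).PosSemidef := Matrix.posSemidef_conjTranspose_mul_self C
  have hC2 := hC.smul (show (0 : ℝ) ≤ 1 / 2 by norm_num)
  have key : ∀ (e e' : Fin n → Fin n ⊕ Fin n) (X : Matrix (Fin n) (Fin n) ℂ),
      (∀ i j, X i j = ∑ k, star (B k (e' i)) * B k (e j)) → ∀ l m,
      (X.trace • (1 : Matrix (Fin n) (Fin n) ℂ) + X) l m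
        = ((1 / 2 : ℝ) : ℂ) * ∑ p, star (row e p l) * row e' p m := by
    intro e e' X hX l m
    have := aux_sum_s6 n (fun k i => B k (e i)) (fun k i => B k (e' i)) l m
    simp only [row]
    rw [this]
    simp only [Matrix.add_apply, Matrix.smul_apply, Matrix.trace, Matrix.diag, hX,
      Matrix.one_apply, smul_eq_mul]
    push_cast
    ring
  convert hC2 using 1
  ext (l | l) (m | m)
  · exact key Sum.inl Sum.inl A11 h11 l m
  · exact key Sum.inl Sum.inr A21 h21 l m
  · exact key Sum.inr Sum.inl A12 h12 l m
  · exact key Sum.inr Sum.inr A22 h22 l m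
end

section
/- Let X, Y, W, Z ∈ M_ℓ(ℂ) be positive semidefinite matrices. If X + Y ≥ W + Z (Löwner ordering), X ≥ W, and X ≥ Z, then det X + det Y ≥ det W + det Z. -/
open Matrix ComplexOrder

section helpers

open scoped MatrixOrder Matrix.Norms.L2Operator in
theorem psd_factor {n : Type*} [Fintype n] [DecidableEq n] {A : Matrix n n ℂ}
    (hA : A.PosSemidef) : ∃ B : Matrix n n ℂ, A = Bᴴ * B := by
  obtain ⟨B, hB⟩ := CStarAlgebra.nonneg_iff_eq_star_mul_self.mp hA.nonneg
  exact ⟨B, hB⟩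

/-- Cauchy–Binet, summed over all maps instead of subsets. -/
theorem cauchy_binet_maps {n κ : Type*} [Fintype n] [DecidableEq n] [Fintype κ] [DecidableEq κ]
    (C : Matrix n κ ℂ) (D : Matrix κ n ℂ) :
    ((Fintype.card n).factorial : ℂ) * (C * D).det =
      ∑ f : n → κ, (C.submatrix id f).det * (D.submatrix f id).det := by
  have h0 : (C * D).det = ∑ f : n → κ, (C.submatrix id f).det * ∏ i, D (f i) i := by
    simp only [det_apply', mul_apply, Finset.prod_univ_sum, Finset.mul_sum,
      Fintype.piFinset_univ]
    rw [Finset.sum_comm]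
    refine Finset.sum_congr rfl fun f _ => ?_
    rw [Finset.sum_mul]
    refine Finset.sum_congr rfl fun σ _ => ?_
    simp [Finset.prod_mul_distrib, mul_assoc]
  have h1 : ∀ σ : Equiv.Perm n, (C * D).det =
      ∑ f : n → κ, (C.submatrix id f).det *
        (((Equiv.Perm.sign σ : ℤ) : ℂ) * ∏ i, D (f (σ i)) i) := by
    intro σ
    rw [h0, ← Equiv.sum_comp (Equiv.arrowCongr σ.symm (Equiv.refl κ))]
    refine Finset.sum_congr rfl fun f _ => ?_
    have : (C.submatrix id ((Equiv.arrowCongr σ.symm (Equiv.refl κ)) f)) =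
        (C.submatrix id f).submatrix id σ := by
      ext i j; simp [Equiv.arrowCongr]
    rw [this, det_permute']
    simp [Equiv.arrowCongr]
    ring
  have h2 : ∑ σ : Equiv.Perm n, (C * D).det =
      ((Fintype.card n).factorial : ℂ) * (C * D).det := by
    simp [Fintype.card_perm]
  rw [← h2, Finset.sum_congr rfl fun σ _ => h1 σ, Finset.sum_comm]
  refine Finset.sum_congr rfl fun f _ => ?_
  rw [← Finset.mul_sum, det_apply' (D.submatrix f id)]
  simp only [submatrix_apply, id]

theorem det_expansion {n : Type} [Fintype n] [DecidableEq n] {S A B : Matrix n n ℂ}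
    (hS : S.PosSemidef) (hA : A.PosSemidef) (hB : B.PosSemidef) :
    ∃ q : (n → n ⊕ (n ⊕ n)) → ℝ, (∀ f, 0 ≤ q f) ∧ ∀ a b : ℝ,
      (S + (a : ℂ) • A + (b : ℂ) • B).det.re = ∑ f : n → n ⊕ (n ⊕ n),
        (∏ i, Sum.elim (fun _ => (1 : ℝ)) (Sum.elim (fun _ => a) (fun _ => b)) (f i)) * q f := by
  obtain ⟨P, rfl⟩ := psd_factor hS
  obtain ⟨Q, rfl⟩ := psd_factor hA
  obtain ⟨R, rfl⟩ := psd_factor hB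
  let C : Matrix n (n ⊕ (n ⊕ n)) ℂ := fromCols Pᴴ (fromCols Qᴴ Rᴴ)
  have hfac : (0 : ℝ) < ((Fintype.card n).factorial : ℝ) := by positivity
  refine ⟨fun f => Complex.normSq (C.submatrix id f).det / ((Fintype.card n).factorial : ℝ),
    fun f => div_nonneg (Complex.normSq_nonneg _) hfac.le, fun a b => ?_⟩
  let D : Matrix (n ⊕ (n ⊕ n)) n ℂ := fromRows P (fromRows ((a : ℂ) • Q) ((b : ℂ) • R))
  have hCD : C * D = Pᴴ * P + (a : ℂ) • (Qᴴ * Q) + (b : ℂ) • (Rᴴ * R) := by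
    simp only [C, D, fromCols_mul_fromRows, Matrix.mul_smul, add_assoc]
  have hD : ∀ f : n → n ⊕ (n ⊕ n), (D.submatrix f id).det =
      ((∏ i, Sum.elim (fun _ => (1 : ℝ)) (Sum.elim (fun _ => a) (fun _ => b)) (f i) : ℝ) : ℂ) *
        star (C.submatrix id f).det := by
    intro f
    rw [← det_conjTranspose]
    push_cast
    rw [← det_mul_column]
    congr 1
    ext i j
    rcases h : f i with k | k | k <;> simp [C, D, h]
  have key := cauchy_binet_maps C D
  rw [hCD] at key
  have key2 := congrArg Complex.re key
  rw [Complex.re_sum] at key2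
  have hl : ∀ z : ℂ, (((Fintype.card n).factorial : ℂ) * z).re =
      ((Fintype.card n).factorial : ℝ) * z.re := by
    intro z; simp
  rw [hl] at key2
  rw [← mul_right_inj' hfac.ne', key2, Finset.mul_sum]
  refine Finset.sum_congr rfl fun f _ => ?_
  rw [hD f, mul_left_comm, Complex.star_def, Complex.mul_conj, ← Complex.ofReal_mul,
    Complex.ofReal_re]
  field_simp

theorem det_mono_add {n : Type} [Fintype n] [DecidableEq n] {S A : Matrix n n ℂ}
    (hS : S.PosSemidef) (hA : A.PosSemidef) : S.det.re ≤ (S + A).det.re := by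
  obtain ⟨q, hq, h⟩ := det_expansion hS hA hA
  have h0 := h 0 0
  have h1 := h 1 0
  simp only [Complex.ofReal_zero, Complex.ofReal_one, zero_smul, one_smul, add_zero] at h0 h1
  rw [h0, h1]
  refine Finset.sum_le_sum fun f _ => mul_le_mul_of_nonneg_right ?_ (hq f)
  refine Finset.prod_le_prod (fun i _ => ?_) (fun i _ => ?_) <;>
    rcases f i with k | k | k <;> simp

theorem det_supermodular {n : Type} [Fintype n] [DecidableEq n] {S A B : Matrix n n ℂ}
    (hS : S.PosSemidef) (hA : A.PosSemidef) (hB : B.PosSemidef) :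
    (S + A).det.re + (S + B).det.re ≤ (S + A + B).det.re + S.det.re := by
  obtain ⟨q, hq, h⟩ := det_expansion hS hA hB
  have h0 := h 0 0
  have h1 := h 1 0
  have h2 := h 0 1
  have h3 := h 1 1
  simp only [Complex.ofReal_zero, Complex.ofReal_one, zero_smul, one_smul, add_zero] at h0 h1 h2 h3
  rw [h0, h1, h2, h3, ← Finset.sum_add_distrib, ← Finset.sum_add_distrib]
  refine Finset.sum_le_sum fun f _ => ?_
  rw [← add_mul, ← add_mul]
  refine mul_le_mul_of_nonneg_right ?_ (hq f)
  by_cases hf : ∃ i k, f i = Sum.inr (Sum.inr k)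
  · obtain ⟨i, k, hik⟩ := hf
    have hz : ∀ a : ℝ, (∏ i, Sum.elim (fun _ => (1 : ℝ))
        (Sum.elim (fun _ => a) (fun _ => (0 : ℝ))) (f i)) = 0 := fun a =>
      Finset.prod_eq_zero (Finset.mem_univ i) (by simp [hik])
    rw [hz, hz, zero_add, add_zero]
    refine Finset.prod_le_prod (fun i _ => ?_) (fun i _ => ?_) <;>
      rcases f i with k | k | k <;> simp
  · push Not at hf
    have hz : ∀ a b : ℝ, (∏ i, Sum.elim (fun _ => (1 : ℝ))
        (Sum.elim (fun _ => a) (fun _ => b)) (f i)) =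
        (∏ i, Sum.elim (fun _ => (1 : ℝ))
        (Sum.elim (fun _ => a) (fun _ => (0 : ℝ))) (f i)) := fun a b =>
      Finset.prod_congr rfl fun i _ => by
        rcases hi : f i with k | k | k
        · simp
        · simp
        · exact absurd hi (hf i k)
    rw [hz 0 1, hz 1 1]

theorem le_det_of_one_le {n : Type} [Fintype n] [DecidableEq n] {X : Matrix n n ℂ}
    (hX : X.IsHermitian) (h : (X - 1).PosSemidef) : (X.det • (1 : Matrix n n ℂ) - X).PosSemidef := by
  let U : Matrix n n ℂ := hX.eigenvectorUnitary
  have hU1 : U * Uᴴ = 1 := Unitary.coe_mul_star_self hX.eigenvectorUnitary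
  have hU2 : Uᴴ * U = 1 := Unitary.coe_star_mul_self hX.eigenvectorUnitary
  have hs : X = U * diagonal (fun i => (hX.eigenvalues i : ℂ)) * Uᴴ := hX.spectral_theorem
  have hdet : X.det = ((∏ i, hX.eigenvalues i : ℝ) : ℂ) := by
    rw [hX.det_eq_prod_eigenvalues]; simp
  have hd : Uᴴ * X * U = diagonal (fun i => (hX.eigenvalues i : ℂ)) := by
    conv_lhs => rw [hs]
    rw [show Uᴴ * (U * diagonal (fun i => (hX.eigenvalues i : ℂ)) * Uᴴ) * U =
      (Uᴴ * U) * diagonal (fun i => (hX.eigenvalues i : ℂ)) * (Uᴴ * U) by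
        simp only [Matrix.mul_assoc], hU2, Matrix.one_mul, Matrix.mul_one]
  have hone : ∀ i, 1 ≤ hX.eigenvalues i := by
    have := h.conjTranspose_mul_mul_same U
    rw [Matrix.mul_sub, Matrix.sub_mul, hd, Matrix.mul_one, hU2, ← diagonal_one, diagonal_sub,
      posSemidef_diagonal_iff] at this
    intro i
    have h2 := this i
    rw [← Complex.ofReal_one, ← Complex.ofReal_sub] at h2
    have h3 := Complex.zero_le_real.mp h2
    linarith
  have hpsd : (diagonal (fun i => X.det - (hX.eigenvalues i : ℂ))).PosSemidef := by
    rw [posSemidef_diagonal_iff]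
    intro i
    rw [hdet, ← Complex.ofReal_sub]
    apply Complex.zero_le_real.mpr
    rw [sub_nonneg, ← Finset.mul_prod_erase _ _ (Finset.mem_univ i)]
    have : (1 : ℝ) ≤ ∏ j ∈ Finset.univ.erase i, hX.eigenvalues j :=
      Finset.prod_induction _ (fun t : ℝ => 1 ≤ t) (fun _ _ => one_le_mul_of_one_le_of_one_le)
        le_rfl fun j _ => hone j
    nlinarith [hone i]
  have := hpsd.mul_mul_conjTranspose_same U
  convert this using 1
  rw [← diagonal_sub, Matrix.mul_sub, Matrix.sub_mul, ← hs, ← smul_one_eq_diagonal,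
    Matrix.mul_smul, Matrix.smul_mul, Matrix.mul_one, hU1]

theorem quad_bound {n : Type} [Fintype n] [DecidableEq n] {X W : Matrix n n ℂ}
    (hX : X.PosSemidef) (hW : W.PosSemidef) (h : (X - W).PosSemidef) (v : n → ℂ) :
    W.det * (star v ⬝ᵥ (X *ᵥ v)) ≤ X.det * (star v ⬝ᵥ (W *ᵥ v)) := by
  by_cases h0 : W.det = 0
  · rw [h0, zero_mul]
    exact mul_nonneg hX.det_nonneg (hW.dotProduct_mulVec_nonneg v)
  obtain ⟨C, rfl⟩ := psd_factor hW
  have hC : IsUnit C.det := by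
    rw [isUnit_iff_ne_zero]; intro hc; apply h0; simp [hc]
  have e1 : C * C⁻¹ = 1 := mul_nonsing_inv _ hC
  have e2 : C⁻¹ * C = 1 := nonsing_inv_mul _ hC
  have e3 : (C⁻¹)ᴴ * Cᴴ = 1 := by rw [← conjTranspose_mul, e1, conjTranspose_one]
  have e4 : Cᴴ * (C⁻¹)ᴴ = 1 := by rw [← conjTranspose_mul, e2, conjTranspose_one]
  set X' := (C⁻¹)ᴴ * X * C⁻¹ with hX'
  have hXX : Cᴴ * X' * C = X := by
    rw [hX', show Cᴴ * ((C⁻¹)ᴴ * X * C⁻¹) * C = (Cᴴ * (C⁻¹)ᴴ) * X * (C⁻¹ * C) by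
      simp only [Matrix.mul_assoc], e2, e4, Matrix.one_mul, Matrix.mul_one]
  have hp : (X' - 1).PosSemidef := by
    have := h.conjTranspose_mul_mul_same C⁻¹
    convert this using 1
    rw [Matrix.mul_sub, Matrix.sub_mul, show (C⁻¹)ᴴ * (Cᴴ * C) * C⁻¹ =
      ((C⁻¹)ᴴ * Cᴴ) * (C * C⁻¹) by simp only [Matrix.mul_assoc], e1, e3, Matrix.one_mul]
  have h5 := (le_det_of_one_le (hX.conjTranspose_mul_mul_same C⁻¹).1 hp).conjTranspose_mul_mul_same C
  rw [← hX', Matrix.mul_sub, Matrix.sub_mul, hXX, Matrix.mul_smul, Matrix.smul_mul,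
    Matrix.mul_one] at h5
  have h6 := h5.dotProduct_mulVec_nonneg v
  rw [sub_mulVec, smul_mulVec, dotProduct_sub, dotProduct_smul, smul_eq_mul] at h6
  have h7 := mul_nonneg hW.det_nonneg h6
  have hd : X.det = (Cᴴ * C).det * X'.det := by
    rw [← hXX]; simp only [det_mul]; ring
  rw [hd, mul_assoc, ← sub_nonneg, ← mul_sub]
  exact h7

end helpers

/-- **Lemma 2.3** (Lin): if `X, Y, W, Z` are positive semidefinite `ℓ×ℓ` complex matrices with
`X + Y ≥ W + Z`, `X ≥ W` and `X ≥ Z` in the Löwner ordering, then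
`det X + det Y ≥ det W + det Z`. -/
theorem det_add_det_ge_of_loewner
    (ℓ : ℕ) (X Y W Z : Matrix (Fin ℓ) (Fin ℓ) ℂ)
    (hX : X.PosSemidef) (hY : Y.PosSemidef) (hW : W.PosSemidef) (hZ : Z.PosSemidef)
    (h1 : (X + Y - (W + Z)).PosSemidef)
    (h2 : (X - W).PosSemidef)
    (h3 : (X - Z).PosSemidef) :
    W.det.re + Z.det.re ≤ X.det.re + Y.det.re := by
  by_cases hS : (W + Z - X).PosSemidef
  · have a := det_supermodular hS h2 h3
    have b := det_mono_add hS h1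
    rw [show W + Z - X + (X - W) = Z by abel, show W + Z - X + (X - Z) = W by abel,
      show Z + (X - Z) = X by abel] at a
    rw [show W + Z - X + (X + Y - (W + Z)) = Y by abel] at b
    linarith
  · rw [posSemidef_iff_dotProduct_mulVec] at hS
    push Not at hS
    obtain ⟨v, hv⟩ := hS ((hW.1.add hZ.1).sub hX.1)
    have bW := quad_bound hX hW h2 v
    have bZ := quad_bound hX hZ h3 v
    have pX := hX.dotProduct_mulVec_nonneg v
    have pW := hW.dotProduct_mulVec_nonneg v
    have pZ := hZ.dotProduct_mulVec_nonneg v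
    have dX := hX.det_nonneg
    have dY := hY.det_nonneg
    have dW := hW.det_nonneg
    have dZ := hZ.det_nonneg
    rw [sub_mulVec, add_mulVec, dotProduct_sub, dotProduct_add] at hv
    generalize star v ⬝ᵥ (X *ᵥ v) = x at *
    generalize star v ⬝ᵥ (W *ᵥ v) = w at *
    generalize star v ⬝ᵥ (Z *ᵥ v) = z at *
    generalize X.det = X at *
    generalize Y.det = Y at *
    generalize W.det = W at *
    generalize Z.det = Z at *
    rw [Complex.le_def] at hv bW bZ pX pW pZ dX dY dW dZ
    simp only [Complex.mul_re, Complex.zero_re, Complex.zero_im, Complex.sub_re, Complex.add_re,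
      Complex.sub_im, Complex.add_im, ← pX.2, ← pW.2, ← pZ.2, ← dX.2, ← dW.2, ← dZ.2, mul_zero,
      zero_mul, sub_zero, add_zero, and_true, not_le] at hv bW bZ
    have qW : 0 ≤ w.re := pW.1
    have qZ : 0 ≤ z.re := pZ.1
    have qX : 0 ≤ X.re := dX.1
    have qY : 0 ≤ Y.re := dY.1
    have hx : 0 < x.re := by linarith
    have : (W.re + Z.re) * x.re ≤ X.re * x.re := by nlinarith [bW.1, bZ.1]
    have := le_of_mul_le_mul_right this hx
    linarith
end

section
/- Let A, B, C ∈ M_n(ℂ) be positive semidefinite. Then det(A + B + C) + det C ≥ det(A + C) + det(B + C). -/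
open Matrix ComplexOrder

theorem aux_rank_one (n : ℕ) (M : Matrix (Fin n) (Fin n) ℂ) (hM : M.PosDef) (u v : Fin n → ℂ) :
    (M + vecMulVec u (star u)).det.re + (M + vecMulVec v (star v)).det.re ≤
      (M + vecMulVec u (star u) + vecMulVec v (star v)).det.re + M.det.re := by
  have hdet : 0 < M.det := hM.det_pos
  have hu : IsUnit M.det := hdet.ne'.isUnit
  let U : Matrix (Fin n) (Fin 2) ℂ := Matrix.of (fun i j => ![u i, v i] j)
  have hUU : vecMulVec u (star u) + vecMulVec v (star v) = U * Uᴴ := by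
    ext i j
    simp [U, Matrix.mul_apply, vecMulVec_apply, Fin.sum_univ_two]
  have hG : (Uᴴ * M⁻¹ * U).PosSemidef := hM.inv.posSemidef.conjTranspose_mul_mul_same U
  set G := Uᴴ * M⁻¹ * U with hGdef
  have h1 : (M + vecMulVec u (star u)).det = M.det * (1 + G 0 0) := by
    rw [vecMulVec_eq Unit, det_add_replicateCol_mul_replicateRow hu,
      det_unique (n := Unit)]
    simp [hGdef, U, Matrix.mul_apply]
  have h2 : (M + vecMulVec v (star v)).det = M.det * (1 + G 1 1) := by
    rw [vecMulVec_eq Unit, det_add_replicateCol_mul_replicateRow hu,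
      det_unique (n := Unit)]
    simp [hGdef, U, Matrix.mul_apply]
  have h3 : (M + vecMulVec u (star u) + vecMulVec v (star v)).det
      = M.det * (1 + G 0 0 + G 1 1 + G.det) := by
    rw [add_assoc, hUU, det_add_mul _ _ hu, ← hGdef, det_fin_two, det_fin_two]
    simp only [Matrix.add_apply, Matrix.one_apply_eq, ne_eq, zero_ne_one, one_ne_zero, not_false_eq_true,
      Matrix.one_apply_ne]
    ring
  have h4 : 0 ≤ M.det * G.det := mul_nonneg hdet.le hG.det_nonneg
  have h5 := (Complex.le_def.1 h4).1
  have h6 : (M + vecMulVec u (star u) + vecMulVec v (star v)).det + M.det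
      = (M + vecMulVec u (star u)).det + (M + vecMulVec v (star v)).det + M.det * G.det := by
    rw [h1, h2, h3]; ring
  have h7 := congrArg Complex.re h6
  simp only [Complex.add_re, Complex.zero_re] at h7 h5
  linarith

theorem aux_sum_s8 (n : ℕ) (B : Matrix (Fin n) (Fin n) ℂ) (m : ℕ) (w : Fin m → Fin n → ℂ)
    (h : ∀ i, ∀ M : Matrix (Fin n) (Fin n) ℂ, M.PosDef →
      (M + vecMulVec (w i) (star (w i))).det.re + (M + B).det.re ≤
      (M + vecMulVec (w i) (star (w i)) + B).det.re + M.det.re) (s : Finset (Fin m)) :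
    ∀ M : Matrix (Fin n) (Fin n) ℂ, M.PosDef →
      (M + ∑ i ∈ s, vecMulVec (w i) (star (w i))).det.re + (M + B).det.re ≤
      (M + ∑ i ∈ s, vecMulVec (w i) (star (w i)) + B).det.re + M.det.re := by
  induction s using Finset.induction_on with
  | empty => intro M _; simp [add_comm]
  | insert a s ha ih =>
    intro M hM
    have h1 := h a M hM
    have h2 := ih (M + vecMulVec (w a) (star (w a)))
      (hM.add_posSemidef (posSemidef_vecMulVec_self_star _))
    rw [Finset.sum_insert ha, ← add_assoc]
    linarith

theorem aux_posDef (n : ℕ) (A B M : Matrix (Fin n) (Fin n) ℂ)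
    (hA : A.PosSemidef) (hB : B.PosSemidef) (hM : M.PosDef) :
    (M + A).det.re + (M + B).det.re ≤ (M + A + B).det.re + M.det.re := by
  obtain ⟨k, a, rfl⟩ := posSemidef_iff_eq_sum_vecMulVec.1 hA
  obtain ⟨l, b, rfl⟩ := posSemidef_iff_eq_sum_vecMulVec.1 hB
  refine aux_sum_s8 n _ k a (fun i N hN => ?_) Finset.univ M hM
  have := aux_sum_s8 n (vecMulVec (a i) (star (a i))) l b
    (fun j N hN => aux_rank_one n N hN _ _) Finset.univ N hN
  rw [add_right_comm N]
  linarith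

/-- For positive semidefinite `n×n` complex matrices `A, B, C`,
`det(A + B + C) + det C ≥ det(A + C) + det(B + C)`. -/
theorem det_add_add_add_det_ge
    (n : ℕ) (A B C : Matrix (Fin n) (Fin n) ℂ)
    (hA : A.PosSemidef) (hB : B.PosSemidef) (hC : C.PosSemidef) :
    (A + C).det.re + (B + C).det.re ≤ (A + B + C).det.re + C.det.re := by
  let P : ℝ → Matrix (Fin n) (Fin n) ℂ := fun t => C + (t : ℂ) • 1
  have hP : Continuous P := by fun_prop
  have hP0 : P 0 = C := by simp [P]
  have key : ∀ t ∈ Set.Ioi (0 : ℝ), (P t + A).det.re + (P t + B).det.re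
      ≤ (P t + A + B).det.re + (P t).det.re := by
    intro t ht
    refine aux_posDef n A B _ hA hB (PosDef.posSemidef_add hC (PosDef.one.smul ?_))
    exact_mod_cast ht
  have hl : Continuous fun t => (P t + A).det.re + (P t + B).det.re :=
    (Complex.continuous_re.comp (hP.add continuous_const).matrix_det).add
      (Complex.continuous_re.comp (hP.add continuous_const).matrix_det)
  have hr : Continuous fun t => (P t + A + B).det.re + (P t).det.re :=
    (Complex.continuous_re.comp ((hP.add continuous_const).add continuous_const).matrix_det).add
      (Complex.continuous_re.comp hP.matrix_det)
  have h0 : (0 : ℝ) ∈ closure (Set.Ioi (0 : ℝ)) := by simp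
  have := le_on_closure key hl.continuousOn hr.continuousOn h0
  simp only [hP0] at this
  rw [add_comm A C, add_comm B C, add_comm (A + B) C, ← add_assoc]
  exact this
end

section
/- Let A = [A_{i,j}]_{i,j=1}^m ∈ M_m(M_n) be positive partial transpose (PPT), i.e., both A and its partial transpose A^τ = [A_{j,i}]_{i,j=1}^m are positive semidefinite. Then (tr A)^{mn} + (det(tr₂ A))^n ≥ det A + (det(tr₁ A))^m. -/
open Matrix BigOperators ComplexOrder

/-- Hadamard-type inequality with scaled diagonal. -/
lemma hadamard_psd {ι : Type*} [Fintype ι] [DecidableEq ι] (A : Matrix ι ι ℂ)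
    (hA : A.PosSemidef) : A.det.re ≤ ∏ i, (A i i).re := by
  have hd : ∀ i, 0 ≤ (A i i).re := fun i => (Complex.le_def.1 hA.diag_nonneg).1
  by_cases h0 : A.det = 0
  · rw [h0]; exact Finset.prod_nonneg fun i _ => hd i
  have hu : IsUnit A := (Matrix.isUnit_iff_isUnit_det A).2 (isUnit_iff_ne_zero.2 h0)
  have hP : A.PosDef := hA.posDef_iff_isUnit.2 hu
  have hp : ∀ i, 0 < (A i i).re := fun i => (Complex.lt_def.1 hP.diag_pos).1
  have him : ∀ i, A i i = ((A i i).re : ℂ) := fun i =>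
    Complex.ext rfl (by simpa using (Complex.le_def.1 (hA.diag_nonneg (i := i))).2.symm)
  set d : ι → ℝ := fun i => (Real.sqrt (A i i).re)⁻¹ with hdd
  have hd2 : ∀ i, d i * d i * (A i i).re = 1 := fun i => by
    simp only [hdd]
    rw [← mul_inv, Real.mul_self_sqrt (hd i), inv_mul_cancel₀ (hp i).ne']
  set D : Matrix ι ι ℂ := diagonal fun i => (d i : ℂ) with hD
  have hDH : Dᴴ = D := by
    rw [hD, diagonal_conjTranspose]; congr 1; ext i; simp
  have hB : (D * A * D).PosSemidef := by
    have := hA.mul_mul_conjTranspose_same D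
    rwa [hDH] at this
  have htr : (D * A * D).trace = Fintype.card ι := by
    simp only [Matrix.trace, Matrix.diag, hD, mul_diagonal, diagonal_mul]
    have : ∀ i, (d i : ℂ) * A i i * d i = 1 := fun i => by
      rw [him i, ← Complex.ofReal_mul, ← Complex.ofReal_mul, mul_right_comm, hd2 i, Complex.ofReal_one]
    simp [this]
  have hdet : (D * A * D).det = ((∏ i, d i * d i : ℝ) : ℂ) * A.det := by
    rw [det_mul, det_mul, hD, det_diagonal]
    push_cast; rw [Finset.prod_mul_distrib]; ring
  have h1 := hB.isHermitian.det_eq_prod_eigenvalues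
  have h2 := hB.isHermitian.trace_eq_sum_eigenvalues
  have h2' : ∑ i, hB.isHermitian.eigenvalues i = Fintype.card ι := by
    rw [htr] at h2
    have := congrArg Complex.re h2
    simpa using this.symm
  have h3 : ∏ i, hB.isHermitian.eigenvalues i ≤ 1 := by
    calc _ ≤ ∏ i, Real.exp (hB.isHermitian.eigenvalues i - 1) :=
          Finset.prod_le_prod (fun i _ => hB.eigenvalues_nonneg i)
            (fun i _ => by linarith [Real.add_one_le_exp (hB.isHermitian.eigenvalues i - 1)])
      _ = 1 := by rw [← Real.exp_sum, Finset.sum_sub_distrib, h2']; simp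
  have h4 : (∏ i, d i * d i) * A.det.re ≤ 1 := by
    rw [hdet] at h1
    have := congrArg Complex.re h1
    rw [Complex.re_ofReal_mul] at this
    rw [this]
    have e : (∏ i, ((hB.isHermitian.eigenvalues i : ℝ) : ℂ)).re
        = ∏ i, hB.isHermitian.eigenvalues i := by
      rw [← Complex.ofReal_prod, Complex.ofReal_re]
    exact e.le.trans h3
  have h5 : (∏ i, d i * d i) * ∏ i, (A i i).re = 1 := by
    rw [← Finset.prod_mul_distrib]; exact Finset.prod_eq_one fun i _ => hd2 i
  have h6 : 0 < ∏ i, (A i i).re := Finset.prod_pos fun i _ => hp i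
  calc A.det.re = ((∏ i, d i * d i) * A.det.re) * ∏ i, (A i i).re := by
        rw [mul_right_comm, h5, one_mul]
    _ ≤ 1 * ∏ i, (A i i).re := by gcongr
    _ = _ := one_mul _

lemma det_le_trace_pow {n : ℕ} (B : Matrix (Fin n) (Fin n) ℂ) (hB : B.PosSemidef) :
    B.det.re ≤ B.trace.re ^ n := by
  have hd : ∀ i, 0 ≤ (B i i).re := fun i => (Complex.le_def.1 hB.diag_nonneg).1
  refine (hadamard_psd B hB).trans ?_
  calc ∏ i, (B i i).re ≤ ∏ _i : Fin n, B.trace.re := by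
        refine Finset.prod_le_prod (fun i _ => hd i) fun i _ => ?_
        simp only [Matrix.trace, Matrix.diag, Complex.re_sum]
        exact Finset.single_le_sum (f := fun i => (B i i).re) (fun j _ => hd j) (Finset.mem_univ i)
    _ = _ := by simp

open Kronecker in
lemma det_le_det_trace2_pow (m n : ℕ) (A : Matrix (Fin m × Fin n) (Fin m × Fin n) ℂ)
    (hA : A.PosSemidef) :
    A.det.re ≤ ((Matrix.of fun i j : Fin m => ∑ r : Fin n, A (i, r) (j, r)).det.re) ^ n := by
  set T : Matrix (Fin m) (Fin m) ℂ := Matrix.of fun i j => ∑ r : Fin n, A (i, r) (j, r) with hT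
  have hTH : T.IsHermitian := by
    ext i j
    simp only [hT, conjTranspose_apply, of_apply, star_sum]
    exact Finset.sum_congr rfl fun r _ => hA.isHermitian.apply _ _
  set U : Matrix (Fin m) (Fin m) ℂ := hTH.eigenvectorUnitary.1 with hU
  have hUU : Uᴴ * U = 1 := by
    rw [← star_eq_conjTranspose]; exact Unitary.coe_star_mul_self _
  have hdiag : Uᴴ * T * U = diagonal (fun i => (hTH.eigenvalues i : ℂ)) := by
    have := hTH.conjStarAlgAut_star_eigenvectorUnitary
    rw [Unitary.conjStarAlgAut_star_apply] at this
    exact this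
  set V : Matrix (Fin m × Fin n) (Fin m × Fin n) ℂ := U ⊗ₖ (1 : Matrix (Fin n) (Fin n) ℂ) with hV
  have hVV : Vᴴ * V = 1 := by
    rw [hV, conjTranspose_kronecker, ← mul_kronecker_mul, hUU]; simp
  have hB := hA.conjTranspose_mul_mul_same V
  have hdetB : (Vᴴ * A * V).det = A.det := by
    rw [det_mul_right_comm, hVV, one_mul]
  have hdetT : T.det.re = ∏ i, hTH.eigenvalues i := by
    have h := hTH.det_eq_prod_eigenvalues
    rw [h]
    exact (congrArg Complex.re (Complex.ofReal_prod _ _).symm)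
  have hd : ∀ i, 0 ≤ ((Vᴴ * A * V) i i).re := fun i => (Complex.le_def.1 hB.diag_nonneg).1
  have hsum : ∀ i, ∑ r, (Vᴴ * A * V) (i, r) (i, r) = (hTH.eigenvalues i : ℂ) := by
    intro i
    have e := congrFun (congrFun hdiag i) i
    rw [diagonal_apply_eq] at e
    rw [← e]
    simp only [mul_apply, hV, hT, conjTranspose_apply, kroneckerMap_apply, of_apply,
      Fintype.sum_prod_type, one_apply, Finset.sum_mul, Finset.mul_sum]
    simp only [mul_ite, mul_one, mul_zero, ite_mul, zero_mul, apply_ite star, star_zero]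
    rw [Finset.sum_comm]
    refine Finset.sum_congr rfl fun j _ => ?_
    conv_rhs => rw [Finset.sum_comm]
    rw [Finset.sum_comm]
    refine Finset.sum_congr rfl fun y _ => ?_
    rw [Finset.sum_eq_single y]
    · simp
    · intro b _ hb
      simp [hb.symm]
    · simp
  rw [← hdetB, hdetT, ← Finset.prod_pow]
  refine (hadamard_psd _ hB).trans ?_
  rw [Fintype.prod_prod_type]
  refine Finset.prod_le_prod (fun i _ => Finset.prod_nonneg fun r _ => hd _) fun i _ => ?_
  have hs : ∑ r, ((Vᴴ * A * V) (i, r) (i, r)).re = hTH.eigenvalues i := by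
    have := congrArg Complex.re (hsum i)
    simpa only [Complex.re_sum, Complex.ofReal_re] using this
  calc _ ≤ ∏ _r : Fin n, hTH.eigenvalues i := by
        refine Finset.prod_le_prod (fun r _ => hd _) fun r _ => ?_
        rw [← hs]
        exact Finset.single_le_sum (f := fun r => ((Vᴴ * A * V) (i, r) (i, r)).re)
          (fun j _ => hd _) (Finset.mem_univ r)
    _ = _ := by simp

/-- **Proposition 2.4.** If `A = [A_{i,j}] ∈ M_m(M_n)` is PPT (both `A` and its partial
transpose `A^τ = [A_{j,i}]` are positive semidefinite), then
`(tr A)^{mn} + det(tr₂ A)^n ≥ det A + det(tr₁ A)^m`. -/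
theorem trace_pow_add_det_trace2_ge_det_add_det_trace1_of_ppt
    (m n : ℕ) (A : Matrix (Fin m × Fin n) (Fin m × Fin n) ℂ)
    (hA : A.PosSemidef)
    (hAτ : (Matrix.of fun p q : Fin m × Fin n => A (q.1, p.2) (p.1, q.2)).PosSemidef) :
    A.det.re + ((Matrix.of fun p q : Fin n => ∑ k : Fin m, A (k, p) (k, q)).det.re) ^ m
      ≤ A.trace.re ^ (m * n)
        + ((Matrix.of fun i j : Fin m => ∑ r : Fin n, A (i, r) (j, r)).det.re) ^ n := by
  have h1 := det_le_det_trace2_pow m n A hA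
  set S : Matrix (Fin n) (Fin n) ℂ := Matrix.of fun p q : Fin n => ∑ k : Fin m, A (k, p) (k, q)
    with hS
  have hSs : S = ∑ k : Fin m, A.submatrix (fun p => (k, p)) (fun p => (k, p)) := by
    ext p q; simp [hS, Matrix.sum_apply]
  have hSP : S.PosSemidef := by
    rw [hSs]; exact posSemidef_sum _ fun k _ => hA.submatrix _
  have htr : S.trace = A.trace := by
    simp only [Matrix.trace, Matrix.diag, hS, of_apply, Fintype.sum_prod_type]
    exact Finset.sum_comm
  have h2 : S.det.re ^ m ≤ A.trace.re ^ (m * n) := by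
    rw [mul_comm, pow_mul, ← htr]
    exact pow_le_pow_left₀ (Complex.le_def.1 hSP.det_nonneg).1 (det_le_trace_pow S hSP) m
  linarith
end

section
/- Let A = [A_{i,j}]_{i,j=1}^m ∈ M_m(M_n) be positive semidefinite. Then (tr A)·I_m − tr₂ A is positive semidefinite, where tr₂ A = [tr A_{i,j}]_{i,j=1}^m ∈ M_m is the second partial trace. -/
open Matrix BigOperators ComplexOrder

theorem aux_trace_sub {m : ℕ} (B : Matrix (Fin m) (Fin m) ℂ) (hB : B.PosSemidef) :
    (B.trace • (1 : Matrix (Fin m) (Fin m) ℂ) - B).PosSemidef := by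
  have hs := hB.1.spectral_theorem
  rw [Unitary.conjStarAlgAut_apply] at hs
  set U : Matrix (Fin m) (Fin m) ℂ := (hB.1.eigenvectorUnitary : Matrix (Fin m) (Fin m) ℂ) with hU
  have hUU : U * star U = 1 := Unitary.coe_mul_star_self _
  have hD : (diagonal (fun i => B.trace - (hB.1.eigenvalues i : ℂ))).PosSemidef := by
    apply PosSemidef.diagonal
    intro i
    have h1 : B.trace = ∑ i, (hB.1.eigenvalues i : ℂ) := hB.1.trace_eq_sum_eigenvalues
    simp only [Pi.zero_apply, sub_nonneg]
    rw [h1]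
    exact Finset.single_le_sum (f := fun i => (hB.1.eigenvalues i : ℂ))
      (fun j _ => by exact_mod_cast hB.eigenvalues_nonneg j) (Finset.mem_univ i)
  have h2 := hD.mul_mul_conjTranspose_same U
  have h3 : diagonal (fun i => B.trace - (hB.1.eigenvalues i : ℂ))
      = B.trace • (1 : Matrix (Fin m) (Fin m) ℂ)
        - diagonal (RCLike.ofReal ∘ hB.1.eigenvalues) := by
    ext i j
    by_cases h : i = j
    · subst h; simp
    · simp [h]
  rw [h3, mul_sub, sub_mul, ← star_eq_conjTranspose, ← hs] at h2
  simpa [hUU] using h2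

/-- For a positive semidefinite block matrix `A = [A_{i,j}] ∈ M_m(M_n)`,
`(tr A)·I_m - tr₂ A` is positive semidefinite, where `tr₂ A = [tr A_{i,j}] ∈ M_m`. -/
theorem trace_smul_one_sub_trace2_posSemidef
    (m n : ℕ) (A : Matrix (Fin m × Fin n) (Fin m × Fin n) ℂ)
    (hA : A.PosSemidef) :
    (A.trace • (1 : Matrix (Fin m) (Fin m) ℂ)
      - Matrix.of fun i j : Fin m => ∑ r : Fin n, A (i, r) (j, r)).PosSemidef := by
  have hB : (Matrix.of fun i j : Fin m => ∑ r : Fin n, A (i, r) (j, r)).PosSemidef := by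
    have h : (Matrix.of fun i j : Fin m => ∑ r : Fin n, A (i, r) (j, r))
        = ∑ r : Fin n, A.submatrix (fun i => (i, r)) (fun i => (i, r)) := by
      ext i j
      simp [Matrix.sum_apply]
    rw [h]
    exact posSemidef_sum _ (fun r _ => hA.submatrix _)
  have ht : A.trace = (Matrix.of fun i j : Fin m => ∑ r : Fin n, A (i, r) (j, r)).trace := by
    simp [Matrix.trace, Fintype.sum_prod_type]
  rw [ht]
  exact aux_trace_sub _ hB
end

section
/- Let A be a positive semidefinite complex block matrix in M_m(M_n). Then (tr A)^{mn} + det A ≥ (det(tr₁ A))^m + (det(tr₂ A))^n, where tr₁ A = Σ_{i=1}^m A_{i,i} ∈ M_n is the first partial trace and tr₂ A = [tr A_{i,j}]_{i,j=1}^m ∈ M_m is the second partial trace. -/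
open Matrix BigOperators ComplexOrder

/-- For at least two nonnegative reals, twice the product is at most a power of the sum. -/
theorem two_mul_prod_le_sum_pow (k : ℕ) (x : Fin (k + 2) → ℝ) (hx : ∀ i, 0 ≤ x i) :
    2 * ∏ i, x i ≤ (∑ i, x i) ^ (k + 2) := by
  have hle : ∀ i, x i ≤ ∑ i, x i := fun i =>
    Finset.single_le_sum (f := x) (fun j _ => hx j) (Finset.mem_univ i)
  have hT : 0 ≤ ∑ i, x i := Finset.sum_nonneg fun i _ => hx i
  have h1 : ∏ i : Fin k, x i.succ.succ ≤ (∑ i, x i) ^ k := by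
    calc ∏ i : Fin k, x i.succ.succ ≤ ∏ _i : Fin k, (∑ i, x i) :=
          Finset.prod_le_prod (fun i _ => hx _) (fun i _ => hle _)
      _ = _ := by simp
  have h2 : 2 * (x 0 * x 1) ≤ (∑ i, x i) ^ 2 := by
    have h3 : x 0 + x 1 ≤ ∑ i, x i := by
      rw [Fin.sum_univ_succ, Fin.sum_univ_succ]
      have : 0 ≤ ∑ i : Fin k, x i.succ.succ := Finset.sum_nonneg fun i _ => hx _
      have h : x (Fin.succ 0) = x 1 := rfl
      linarith
    nlinarith [hx 0, hx 1]
  have h4 : ∏ i, x i = (x 0 * x 1) * ∏ i : Fin k, x i.succ.succ := by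
    rw [Fin.prod_univ_succ, Fin.prod_univ_succ, mul_assoc]; rfl
  rw [h4, pow_add, ← mul_assoc, mul_comm (_ ^ k)]
  exact mul_le_mul h2 h1 (Finset.prod_nonneg fun i _ => hx _) (by positivity)

/-- Determinant of a positive semidefinite matrix of size at least two. -/
theorem two_mul_det_le_trace_pow (n : ℕ) (hn : 2 ≤ n) (M : Matrix (Fin n) (Fin n) ℂ)
    (hM : M.PosSemidef) : 0 ≤ M.det.re ∧ 2 * M.det.re ≤ M.trace.re ^ n := by
  obtain ⟨k, rfl⟩ := Nat.exists_eq_add_of_le' hn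
  have hd : M.det.re = ∏ i, hM.1.eigenvalues i := by
    rw [hM.1.det_eq_prod_eigenvalues, ← Complex.ofReal_re (∏ i, hM.1.eigenvalues i)]
    push_cast; rfl
  have ht : M.trace.re = ∑ i, hM.1.eigenvalues i := by
    rw [hM.1.trace_eq_sum_eigenvalues, ← Complex.ofReal_re (∑ i, hM.1.eigenvalues i)]
    push_cast; rfl
  rw [hd, ht]
  exact ⟨Finset.prod_nonneg fun i _ => hM.eigenvalues_nonneg i,
    two_mul_prod_le_sum_pow k _ hM.eigenvalues_nonneg⟩

theorem two_mul_pow_le (d T : ℝ) (n m : ℕ) (hm : 1 ≤ m) (hd : 0 ≤ d) (h : 2 * d ≤ T ^ n) :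
    2 * d ^ m ≤ T ^ (n * m) := by
  rw [pow_mul]
  calc 2 * d ^ m ≤ 2 ^ m * d ^ m := by
        gcongr
        exact le_self_pow₀ (by norm_num) (by omega)
    _ = (2 * d) ^ m := (mul_pow _ _ _).symm
    _ ≤ _ := by gcongr



/-- **Lin's inequality** (inequality (4) of the paper): for a positive semidefinite block
matrix `A ∈ M_m(M_n)`, `(tr A)^{mn} + det A ≥ det(tr₁ A)^m + det(tr₂ A)^n`, where
`tr₁ A = ∑ᵢ A_{i,i}` and `tr₂ A = [tr A_{i,j}]`. -/
theorem trace_pow_add_det_ge_det_trace1_add_det_trace2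
    (m n : ℕ) (A : Matrix (Fin m × Fin n) (Fin m × Fin n) ℂ)
    (hA : A.PosSemidef) :
    ((Matrix.of fun p q : Fin n => ∑ k : Fin m, A (k, p) (k, q)).det.re) ^ m
      + ((Matrix.of fun i j : Fin m => ∑ r : Fin n, A (i, r) (j, r)).det.re) ^ n
      ≤ A.trace.re ^ (m * n) + A.det.re := by

  rcases Nat.eq_zero_or_pos m with rfl | hm
  · simp
  rcases Nat.eq_zero_or_pos n with rfl | hn
  · simp
  rcases Nat.eq_or_lt_of_le hm with rfl | hm2
  · apply le_of_eq
    have h1 : (Matrix.of fun p q : Fin n => ∑ k : Fin 1, A (k, p) (k, q))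
        = A.submatrix (Equiv.uniqueProd (Fin n) (Fin 1)).symm
            (Equiv.uniqueProd (Fin n) (Fin 1)).symm := by
      ext p q; simp
    rw [h1, Matrix.det_submatrix_equiv_self]
    simp [Matrix.trace, Fintype.sum_prod_type]
    ring
  rcases Nat.eq_or_lt_of_le hn with rfl | hn2
  · apply le_of_eq
    have h1 : (Matrix.of fun i j : Fin m => ∑ r : Fin 1, A (i, r) (j, r))
        = A.submatrix (Equiv.prodUnique (Fin m) (Fin 1)).symm
            (Equiv.prodUnique (Fin m) (Fin 1)).symm := by
      ext p q; simp
    rw [h1, Matrix.det_submatrix_equiv_self]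
    simp [Matrix.trace, Fintype.sum_prod_type]
  have p1 : (Matrix.of fun p q : Fin n => ∑ k : Fin m, A (k, p) (k, q)).PosSemidef := by
    have : (Matrix.of fun p q : Fin n => ∑ k : Fin m, A (k, p) (k, q))
        = ∑ k : Fin m, A.submatrix (fun p => (k, p)) (fun p => (k, p)) := by
      ext p q; simp [Matrix.sum_apply]
    rw [this]
    exact Matrix.posSemidef_sum _ fun k _ => hA.submatrix _
  have p2 : (Matrix.of fun i j : Fin m => ∑ r : Fin n, A (i, r) (j, r)).PosSemidef := by
    have : (Matrix.of fun i j : Fin m => ∑ r : Fin n, A (i, r) (j, r))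
        = ∑ r : Fin n, A.submatrix (fun i => (i, r)) (fun i => (i, r)) := by
      ext p q; simp [Matrix.sum_apply]
    rw [this]
    exact Matrix.posSemidef_sum _ fun k _ => hA.submatrix _
  have t1 : (Matrix.of fun p q : Fin n => ∑ k : Fin m, A (k, p) (k, q)).trace = A.trace := by
    simp only [Matrix.trace, Matrix.diag, Matrix.of_apply, Fintype.sum_prod_type]
    exact Finset.sum_comm
  have t2 : (Matrix.of fun i j : Fin m => ∑ r : Fin n, A (i, r) (j, r)).trace = A.trace := by
    simp only [Matrix.trace, Matrix.diag, Matrix.of_apply, Fintype.sum_prod_type]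
  obtain ⟨a1, b1⟩ := two_mul_det_le_trace_pow n hn2 _ p1
  obtain ⟨a2, b2⟩ := two_mul_det_le_trace_pow m hm2 _ p2
  rw [t1] at b1
  rw [t2] at b2
  have c1 := two_mul_pow_le _ _ n m hm a1 b1
  have c2 := two_mul_pow_le _ _ m n hn a2 b2
  rw [mul_comm n m] at c1
  have hdet : 0 ≤ A.det.re := (Complex.le_def.1 hA.det_nonneg).1
  linarith
end
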